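/- For Lebesgue-almost every real number d, the following holds: for every compact set K contained in the open strip D := {s ∈ ℂ : 1/2 < Re(s) < 1} with connected complement in ℂ and every ε > 0, one has liminf_{T→∞} (1/T)·μ{τ ∈ [0,T] : sup_{s∈K} |ζ(s+idτ) − ζ(s+iτ)| < ε} > 0. -/

import Mathlib

open MeasureTheory Filter Complex
open scoped ENNReal

/-- The open strip `D = {s : 1/2 < Re s < 1}`. -/
def strip : Set ℂ := {s : ℂ | 1/2 < s.re ∧ s.re < 1}

/-- Lower density of a set of real numbers:
`liminf_{T→∞} (1/T)·μ(S ∩ [0,T])`. -/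
noncomputable def lowerDens (S : Set ℝ) : ℝ :=
  liminf (fun T : ℝ => (volume (S ∩ Set.Icc 0 T)).toReal / T) atTop

/-- `sup_{s ∈ K} |f s|`, valued in `ℝ≥0∞`. -/
noncomputable def supNorm (K : Set ℂ) (f : ℂ → ℂ) : ℝ≥0∞ :=
  ⨆ s ∈ K, (‖f s‖₊ : ℝ≥0∞)


def HasMean (f : ℝ → ℂ) (a : ℂ) : Prop :=
  Continuous f ∧ Tendsto (fun T : ℝ => (∫ τ in (0:ℝ)..T, f τ) / (T : ℂ)) atTop (nhds a)

lemma HasMean.add {f g : ℝ → ℂ} {a b : ℂ} (hf : HasMean f a) (hg : HasMean g b) :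
    HasMean (fun τ => f τ + g τ) (a + b) := by
  refine ⟨hf.1.add hg.1, ?_⟩
  refine (hf.2.add hg.2).congr fun T => ?_
  rw [intervalIntegral.integral_add (hf.1.intervalIntegrable _ _) (hg.1.intervalIntegrable _ _),
    add_div]

lemma HasMean.smul {f : ℝ → ℂ} {a : ℂ} (c : ℂ) (hf : HasMean f a) :
    HasMean (fun τ => c * f τ) (c * a) := by
  refine ⟨hf.1.const_smul c, ?_⟩
  refine (hf.2.const_mul c).congr fun T => ?_
  rw [intervalIntegral.integral_const_mul, mul_div_assoc]

lemma HasMean.zero : HasMean (fun _ => 0) 0 := by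
  refine ⟨continuous_const, ?_⟩
  simp

lemma HasMean.exp_zero {l : ℝ} (h : l = 0) : HasMean (fun τ : ℝ => cexp (I * l * τ)) 1 := by
  refine ⟨by fun_prop, ?_⟩
  refine tendsto_const_nhds.congr' ?_
  filter_upwards [eventually_gt_atTop 0] with T hT
  have : (T : ℂ) ≠ 0 := by exact_mod_cast hT.ne'
  simp [h, this]

lemma HasMean.exp_ne {l : ℝ} (h : l ≠ 0) : HasMean (fun τ : ℝ => cexp (I * l * τ)) 0 := by
  refine ⟨by fun_prop, ?_⟩
  have hl : (I * l : ℂ) ≠ 0 := by simp [h]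
  have hz : Tendsto (fun T : ℝ => (2 / |l|) / T) atTop (nhds 0) := tendsto_const_nhds.div_atTop tendsto_id
  refine squeeze_zero_norm' ?_ hz
  filter_upwards [eventually_gt_atTop 0] with T hT
  rw [integral_exp_mul_complex hl, norm_div, norm_div]
  have h1 : ‖cexp (I * l * T) - cexp (I * l * (0:ℝ))‖ ≤ 2 := by
    refine (norm_sub_le _ _).trans ?_
    have e1 : ‖cexp (I * l * T)‖ = 1 := by
      rw [show (I * l * T : ℂ) = ((l * T : ℝ) : ℂ) * I by push_cast; ring]
      exact norm_exp_ofReal_mul_I _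
    rw [e1]; simp; norm_num
  have h2 : ‖(I * l : ℂ)‖ = |l| := by simp
  have h3 : ‖(T : ℂ)‖ = T := by simp [hT.le]
  rw [h2, h3]
  gcongr

/-- trigonometric polynomials with frequencies in `Λ` -/
def trig (Λ : AddSubgroup ℝ) : Submodule ℂ (ℝ → ℂ) :=
  Submodule.span ℂ {f | ∃ l ∈ Λ, f = fun τ : ℝ => cexp (I * l * τ)}

lemma trig_exp {Λ : AddSubgroup ℝ} {l : ℝ} (h : l ∈ Λ) :
    (fun τ : ℝ => cexp (I * l * τ)) ∈ trig Λ := Submodule.subset_span ⟨l, h, rfl⟩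

lemma mean_prod1 {Λ : AddSubgroup ℝ} {d : ℝ}
    (hd : ∀ l ∈ Λ, ∀ m ∈ Λ, l + d * m = 0 → m = 0) {q : ℝ → ℂ} (hq : q ∈ trig Λ) :
    ∃ a, HasMean q a ∧ ∀ m ∈ Λ, HasMean (fun τ => q τ * cexp (I * m * (d * τ : ℝ)))
      (a * if m = 0 then 1 else 0) := by
  induction hq using Submodule.span_induction with
  | mem x hx =>
    obtain ⟨l, hl, rfl⟩ := hx
    have key : ∀ m : ℝ, (fun τ : ℝ => cexp (I * l * τ) * cexp (I * m * (d * τ : ℝ))) =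
        fun τ : ℝ => cexp (I * (l + d * m : ℝ) * τ) := by
      intro m; ext τ; rw [← Complex.exp_add]; congr 1; push_cast; ring
    by_cases h : l = 0
    · refine ⟨1, HasMean.exp_zero h, fun m hm => ?_⟩
      rw [key]
      split_ifs with hm0
      · simpa using HasMean.exp_zero (l := l + d * m) (by simp [h, hm0])
      · simpa using HasMean.exp_ne (l := l + d * m) (fun h' => hm0 (hd l hl m hm h'))
    · refine ⟨0, HasMean.exp_ne h, fun m hm => ?_⟩
      rw [key, zero_mul]
      apply HasMean.exp_ne
      intro h'
      have := hd l hl m hm h'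
      simp [this] at h'
      exact h h'
  | zero => exact ⟨0, HasMean.zero, fun m hm => by simpa using HasMean.zero⟩
  | add x y _ _ hx hy =>
    obtain ⟨a, ha, ha'⟩ := hx
    obtain ⟨b, hb, hb'⟩ := hy
    refine ⟨a + b, ha.add hb, fun m hm => ?_⟩
    have := (ha' m hm).add (hb' m hm)
    simpa only [Pi.add_apply, add_mul] using this
  | smul c x _ hx =>
    obtain ⟨a, ha, ha'⟩ := hx
    refine ⟨c * a, ha.smul c, fun m hm => ?_⟩
    have := (ha' m hm).smul c
    simpa only [Pi.smul_apply, smul_eq_mul, mul_assoc] using this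

lemma mean_prod2 {Λ : AddSubgroup ℝ} {d : ℝ}
    (hd : ∀ l ∈ Λ, ∀ m ∈ Λ, l + d * m = 0 → m = 0) {q r : ℝ → ℂ} (hq : q ∈ trig Λ)
    (hr : r ∈ trig Λ) :
    ∃ a b, HasMean q a ∧ HasMean r b ∧ HasMean (fun τ => q τ * r (d * τ)) (a * b) := by
  obtain ⟨a, ha, ha'⟩ := mean_prod1 hd hq
  refine ⟨a, ?_⟩
  simp only [ha, true_and]
  clear hq
  induction hr using Submodule.span_induction with
  | mem x hx =>
    obtain ⟨l, hl, rfl⟩ := hx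
    by_cases h : l = 0
    · exact ⟨1, HasMean.exp_zero h, by simpa [h] using ha' l hl⟩
    · exact ⟨0, HasMean.exp_ne h, by simpa [h] using ha' l hl⟩
  | zero => exact ⟨0, HasMean.zero, by simpa using HasMean.zero⟩
  | add x y _ _ hx hy =>
    obtain ⟨b, hb, hb'⟩ := hx
    obtain ⟨c, hc, hc'⟩ := hy
    refine ⟨b + c, hb.add hc, ?_⟩
    have := hb'.add hc'
    simpa only [Pi.add_apply, mul_add] using this
  | smul c x _ hx =>
    obtain ⟨b, hb, hb'⟩ := hx
    refine ⟨c * b, hb.smul c, ?_⟩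
    have := hb'.smul c
    simpa only [Pi.smul_apply, smul_eq_mul, mul_left_comm] using this

lemma mean_prod {Λ : AddSubgroup ℝ} {d : ℝ}
    (hd : ∀ l ∈ Λ, ∀ m ∈ Λ, l + d * m = 0 → m = 0) {q : ℝ → ℂ} (hq : q ∈ trig Λ) :
    ∃ a, HasMean q a ∧ HasMean (fun τ => q τ * q (d * τ)) (a * a) := by
  obtain ⟨a, b, ha, hb, h⟩ := mean_prod2 hd hq hq
  have : a = b := tendsto_nhds_unique ha.2 hb.2
  subst this
  exact ⟨a, ha, h⟩

lemma trig_mul {Λ : AddSubgroup ℝ} {q r : ℝ → ℂ} (hq : q ∈ trig Λ) (hr : r ∈ trig Λ) :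
    (fun τ => q τ * r τ) ∈ trig Λ := by
  induction hq using Submodule.span_induction with
  | mem x hx =>
    obtain ⟨l, hl, rfl⟩ := hx
    induction hr using Submodule.span_induction with
    | mem y hy =>
      obtain ⟨m, hm, rfl⟩ := hy
      convert trig_exp (Λ.add_mem hl hm) using 2 with τ
      rw [← Complex.exp_add]; congr 1; push_cast; ring
    | zero => convert (trig Λ).zero_mem using 1; ext τ; simp
    | add x y _ _ hx hy => convert (trig Λ).add_mem hx hy using 1; ext τ; simp; try ring
    | smul c x _ hx =>
      convert (trig Λ).smul_mem c hx using 1; ext τ; simp; try ring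
  | zero => convert (trig Λ).zero_mem using 1; ext τ; simp
  | add x y _ _ hx hy => convert (trig Λ).add_mem hx hy using 1; ext τ; simp; try ring
  | smul c x _ hx =>
    convert (trig Λ).smul_mem c hx using 1; ext τ; simp; try ring

lemma trig_conj {Λ : AddSubgroup ℝ} {q : ℝ → ℂ} (hq : q ∈ trig Λ) :
    (fun τ => star (q τ)) ∈ trig Λ := by
  induction hq using Submodule.span_induction with
  | mem x hx =>
    obtain ⟨l, hl, rfl⟩ := hx
    convert trig_exp (Λ.neg_mem hl) using 2 with τ
    simp only [RCLike.star_def]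
    rw [← Complex.exp_conj]
    simp
  | zero => convert (trig Λ).zero_mem using 1; ext τ; simp
  | add x y _ _ hx hy => convert (trig Λ).add_mem hx hy using 1; ext τ; simp; try ring
  | smul c x _ hx =>
    convert (trig Λ).smul_mem (star c) hx using 1; ext τ; simp; try ring

lemma trig_const {Λ : AddSubgroup ℝ} (c : ℂ) : (fun _ => c) ∈ trig Λ := by
  convert (trig Λ).smul_mem c (trig_exp Λ.zero_mem) using 1
  ext; simp

lemma trig_approx {Λ : AddSubgroup ℝ} {m : ℕ} (l : Fin m → ℝ) (hl : ∀ i, l i ∈ Λ)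
    (G : C(Fin m → Circle, ℂ)) {δ : ℝ} (hδ : 0 < δ) :
    ∃ q ∈ trig Λ, ∀ τ : ℝ, ‖G (fun i => Circle.exp (l i * τ)) - q τ‖ ≤ δ := by
  let e : Fin m → C(Fin m → Circle, ℂ) := fun i => ⟨fun z => (z i : ℂ), by fun_prop⟩
  let A : StarSubalgebra ℂ C(Fin m → Circle, ℂ) := StarAlgebra.adjoin ℂ (Set.range e)
  have hsep : A.SeparatesPoints := by
    intro x y hxy
    obtain ⟨i, hi⟩ := Function.ne_iff.mp hxy
    refine ⟨e i, ⟨e i, StarAlgebra.subset_adjoin ℂ _ ⟨i, rfl⟩, rfl⟩, ?_⟩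
    simpa [e, Circle.ext_iff] using hi
  have htop := ContinuousMap.starSubalgebra_topologicalClosure_eq_top_of_separatesPoints A hsep
  have hG : G ∈ A.topologicalClosure := by rw [htop]; trivial
  have hG' : G ∈ closure (A : Set C(Fin m → Circle, ℂ)) := by
    rw [← StarSubalgebra.topologicalClosure_coe]; exact hG
  obtain ⟨g, hgA, hg⟩ := Metric.mem_closure_iff.mp hG' δ hδ
  refine ⟨fun τ => g (fun i => Circle.exp (l i * τ)), ?_, fun τ => ?_⟩
  · clear hg
    change g ∈ StarAlgebra.adjoin ℂ (Set.range e) at hgA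
    induction hgA using StarAlgebra.adjoin_induction with
    | mem x hx =>
      obtain ⟨i, rfl⟩ := hx
      convert trig_exp (hl i) using 2 with τ
      simp [e, Circle.coe_exp]
      congr 1; ring
    | algebraMap r => exact trig_const r
    | add x y _ _ hx hy => exact (trig Λ).add_mem hx hy
    | mul x y _ _ hx hy => exact trig_mul hx hy
    | star x _ hx => exact trig_conj hx
  · rw [← dist_eq_norm]
    exact (ContinuousMap.dist_apply_le_dist _).trans hg.le

lemma bes_approx {X : Type*} [NormedAddCommGroup X] [NormedSpace ℂ X] {Λ : AddSubgroup ℝ}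
    {F : ℝ → X} (hFc : Continuous F)
    (hF : ∀ δ : ℝ, 0 < δ → ∃ (m : ℕ) (l : Fin m → ℝ) (v : Fin m → X), (∀ i, l i ∈ Λ) ∧
      ∀ᶠ T : ℝ in atTop, ∫ τ in (-T)..T, ‖F τ - ∑ i, (Circle.exp (l i * τ) : ℂ) • v i‖ ≤ δ * T)
    (ψ : X → ℝ) (L : ℝ) (hL : 0 < L) (hψ : ∀ x y, |ψ x - ψ y| ≤ L * ‖x - y‖)
    (h0 : ∀ x, 0 ≤ ψ x) (h1 : ∀ x, ψ x ≤ 1) (hψc : Continuous ψ) {η : ℝ} (hη : 0 < η) :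
    ∃ q ∈ trig Λ, Continuous q ∧ (∀ τ, ‖q τ‖ ≤ 2) ∧
      ∀ᶠ T : ℝ in atTop, ∫ τ in (-T)..T, ‖(ψ (F τ) : ℂ) - q τ‖ ≤ η * T := by
  obtain ⟨m, l, v, hl, hT⟩ := hF (η / (2 * L)) (by positivity)
  let G : C(Fin m → Circle, ℂ) := ⟨fun z => (ψ (∑ i, (z i : ℂ) • v i) : ℂ), by fun_prop⟩
  obtain ⟨q, hq, hqa⟩ := trig_approx l hl G (δ := min 1 (η / 4)) (by positivity)
  have hqc : Continuous q := by
    have hd : ∀ l ∈ (⊥ : AddSubgroup ℝ), ∀ m ∈ (⊥ : AddSubgroup ℝ), l + (0:ℝ) * m = 0 → m = 0 := by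
      intro l _ m hm _; simpa using hm
    clear hqa
    induction hq using Submodule.span_induction with
    | mem x hx => obtain ⟨l, hl, rfl⟩ := hx; fun_prop
    | zero => exact continuous_const
    | add x y _ _ hx hy => exact hx.add hy
    | smul c x _ hx => exact hx.const_smul c
  refine ⟨q, hq, hqc, fun τ => ?_, ?_⟩
  · have h2 := (hqa τ).trans (min_le_left _ _)
    have h3 : ‖G (fun i => Circle.exp (l i * τ))‖ ≤ 1 := by
      simp only [G, ContinuousMap.coe_mk, norm_real, Real.norm_eq_abs]
      rw [abs_of_nonneg (h0 _)]; exact h1 _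
    have := norm_sub_norm_le (q τ) (G (fun i => Circle.exp (l i * τ)))
    rw [norm_sub_rev] at this
    linarith
  · filter_upwards [hT, eventually_gt_atTop 0] with T hT hT0
    have hb : ∀ τ, ‖(ψ (F τ) : ℂ) - q τ‖ ≤
        L * ‖F τ - ∑ i, (Circle.exp (l i * τ) : ℂ) • v i‖ + η / 4 := by
      intro τ
      have e1 : ‖(ψ (F τ) : ℂ) - G (fun i => Circle.exp (l i * τ))‖ ≤
          L * ‖F τ - ∑ i, (Circle.exp (l i * τ) : ℂ) • v i‖ := by
        simp only [G, ContinuousMap.coe_mk]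
        rw [← ofReal_sub, norm_real]
        exact hψ _ _
      have e2 := (hqa τ).trans (min_le_right _ _)
      have := norm_sub_le_norm_sub_add_norm_sub (ψ (F τ) : ℂ) (G (fun i => Circle.exp (l i * τ))) (q τ)
      linarith
    calc ∫ τ in (-T)..T, ‖(ψ (F τ) : ℂ) - q τ‖
        ≤ ∫ τ in (-T)..T, (L * ‖F τ - ∑ i, (Circle.exp (l i * τ) : ℂ) • v i‖ + η / 4) := by
          apply intervalIntegral.integral_mono_on (by linarith)
          · exact Continuous.intervalIntegrable (by fun_prop) _ _
          · exact Continuous.intervalIntegrable (by fun_prop) _ _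
          · intro τ _; exact hb τ
      _ = L * (∫ τ in (-T)..T, ‖F τ - ∑ i, (Circle.exp (l i * τ) : ℂ) • v i‖) + (2 * T) * (η / 4) := by
          rw [intervalIntegral.integral_add, intervalIntegral.integral_const_mul,
            intervalIntegral.integral_const]
          · simp; left; ring
          · exact Continuous.intervalIntegrable (by fun_prop) _ _
          · exact Continuous.intervalIntegrable (by fun_prop) _ _
      _ ≤ L * (η / (2 * L) * T) + (2 * T) * (η / 4) := by gcongr
      _ = η * T := by field_simp; ring

lemma integral_sub_le {f : ℝ → ℝ} (hf : Continuous f) (h0 : ∀ t, 0 ≤ f t) {T : ℝ} (hT : 0 ≤ T) :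
    ∫ τ in (0:ℝ)..T, f τ ≤ ∫ τ in (-T)..T, f τ := by
  rw [← intervalIntegral.integral_add_adjacent_intervals
    (hf.intervalIntegrable (-T) 0) (hf.intervalIntegrable 0 T)]
  have := intervalIntegral.integral_nonneg (f := f) (a := -T) (b := 0) (μ := volume) (by linarith) (fun u _ => h0 u)
  linarith

lemma integral_dil_le {f : ℝ → ℝ} (hf : Continuous f) (h0 : ∀ t, 0 ≤ f t) {d T : ℝ} (hd : d ≠ 0)
    (hT : 0 ≤ T) :
    ∫ τ in (0:ℝ)..T, f (d * τ) ≤ |d|⁻¹ * ∫ τ in (-(|d| * T))..(|d| * T), f τ := by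
  rcases lt_or_gt_of_ne hd with h | h
  · rw [intervalIntegral.integral_comp_mul_left _ hd, abs_of_neg h]
    have e : ∫ τ in (d * 0)..(d * T), f τ = - ∫ τ in (-(-d * T))..0, f τ := by
      rw [intervalIntegral.integral_symm]; simp
    rw [e, smul_eq_mul, mul_neg, ← neg_mul, ← inv_neg]
    apply mul_le_mul_of_nonneg_left _ (by simp; linarith)
    rw [← intervalIntegral.integral_add_adjacent_intervals
      (hf.intervalIntegrable (-(-d * T)) 0) (hf.intervalIntegrable 0 (-d * T))]
    have := intervalIntegral.integral_nonneg (f := f) (a := 0) (b := -d * T) (μ := volume) (by nlinarith) (fun u _ => h0 u)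
    linarith
  · rw [intervalIntegral.integral_comp_mul_left _ hd, abs_of_pos h, mul_zero]
    apply mul_le_mul_of_nonneg_left _ (by positivity)
    exact integral_sub_le hf h0 (by positivity)

theorem abstract_selfapprox {X : Type*} [NormedAddCommGroup X] [NormedSpace ℂ X]
    {Λ : AddSubgroup ℝ} {d : ℝ} (hd0 : d ≠ 0)
    (hd : ∀ l ∈ Λ, ∀ m ∈ Λ, l + d * m = 0 → m = 0)
    {F : ℝ → X} (hFc : Continuous F)
    (hF : ∀ δ : ℝ, 0 < δ → ∃ (m : ℕ) (l : Fin m → ℝ) (v : Fin m → X), (∀ i, l i ∈ Λ) ∧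
      ∀ᶠ T : ℝ in atTop, ∫ τ in (-T)..T, ‖F τ - ∑ i, (Circle.exp (l i * τ) : ℂ) • v i‖ ≤ δ * T)
    {ε : ℝ} (hε : 0 < ε) :
    ∃ c : ℝ, 0 < c ∧ ∀ᶠ T : ℝ in atTop,
      c * T ≤ (volume ({τ : ℝ | ‖F (d * τ) - F τ‖ < ε} ∩ Set.Icc 0 T)).toReal := by
  classical
  obtain ⟨m, l, v, hl, hP⟩ := hF (ε / 8) (by positivity)
  let S : (Fin m → Circle) → X := fun z => ∑ i, (z i : ℂ) • v i
  have hS : Continuous S := by fun_prop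
  have hcomp : IsCompact (Set.range S) := isCompact_range hS
  obtain ⟨t, -, htf, htc⟩ := hcomp.finite_cover_balls (e := ε / 8) (by positivity)
  lift t to Finset X using htf
  let ψ : X → X → ℝ := fun c x => max 0 (1 - (2 / ε) * ‖x - c‖)
  have hψL : ∀ c x y, |ψ c x - ψ c y| ≤ (2 / ε) * ‖x - y‖ := by
    intro c x y
    refine (abs_max_sub_max_le_max _ _ _ _).trans ?_
    simp only [sub_self, abs_zero]
    refine max_le (by positivity) ?_
    rw [show 1 - 2 / ε * ‖x - c‖ - (1 - 2 / ε * ‖y - c‖) = (2 / ε) * (‖y - c‖ - ‖x - c‖) by ring,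
      abs_mul, abs_of_pos (by positivity : 0 < 2 / ε)]
    gcongr
    refine (abs_norm_sub_norm_le _ _).trans ?_
    rw [norm_sub_rev]; simp
  have hψ0 : ∀ c x, 0 ≤ ψ c x := fun c x => le_max_left _ _
  have hψ1 : ∀ c x, ψ c x ≤ 1 := fun c x => max_le (by norm_num) (by
    have : 0 ≤ 2 / ε * ‖x - c‖ := by positivity
    linarith)
  have hψc : ∀ c, Continuous (ψ c) := fun c => by fun_prop
  -- the sum of the bumps
  have hsum : ∀ τ, 3 / 4 - (2 / ε) * ‖F τ - ∑ i, (Circle.exp (l i * τ) : ℂ) • v i‖ ≤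
      ∑ c ∈ t, ψ c (F τ) := by
    intro τ
    have hm : S (fun i => Circle.exp (l i * τ)) ∈ ⋃ x ∈ (t : Set X), Metric.ball x (ε / 8) :=
      htc ⟨_, rfl⟩
    simp only [Set.mem_iUnion, exists_prop] at hm
    obtain ⟨c, hc, hcb⟩ := hm
    rw [mem_ball_iff_norm] at hcb
    refine le_trans ?_ (Finset.single_le_sum (f := fun c => ψ c (F τ)) (fun c _ => hψ0 c _) hc)
    refine le_trans ?_ (le_max_right _ _)
    have h3 := norm_sub_le_norm_sub_add_norm_sub (F τ) (S (fun i => Circle.exp (l i * τ))) c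
    have h4 : ‖F τ - c‖ ≤ ‖F τ - ∑ i, (Circle.exp (l i * τ) : ℂ) • v i‖ + ε / 8 := by
      refine h3.trans ?_
      simp only [S] at hcb ⊢
      linarith
    have h5 : 2 / ε * ‖F τ - c‖ ≤ 2 / ε * (‖F τ - ∑ i, (Circle.exp (l i * τ) : ℂ) • v i‖ + ε / 8) := by
      gcongr
    have h6 : 2 / ε * (ε / 8) = 1 / 4 := by field_simp; norm_num
    rw [mul_add, h6] at h5
    linarith
  have hmean : ∀ᶠ T : ℝ in atTop, T / 2 ≤ ∫ τ in (0:ℝ)..T, ∑ c ∈ t, ψ c (F τ) := by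
    filter_upwards [hP, eventually_gt_atTop 0] with T hP hT
    have h1 : ∫ τ in (0:ℝ)..T, (3 / 4 - (2 / ε) * ‖F τ - ∑ i, (Circle.exp (l i * τ) : ℂ) • v i‖) ≤
        ∫ τ in (0:ℝ)..T, ∑ c ∈ t, ψ c (F τ) := by
      apply intervalIntegral.integral_mono_on hT.le
      · exact Continuous.intervalIntegrable (by fun_prop) _ _
      · exact Continuous.intervalIntegrable (by fun_prop) _ _
      · intro τ _; exact hsum τ
    rw [intervalIntegral.integral_sub (Continuous.intervalIntegrable (by fun_prop) _ _)
      (Continuous.intervalIntegrable (by fun_prop) _ _), intervalIntegral.integral_const_mul,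
      intervalIntegral.integral_const, smul_eq_mul] at h1
    have h2 := integral_sub_le (f := fun τ => ‖F τ - ∑ i, (Circle.exp (l i * τ) : ℂ) • v i‖)
      (by fun_prop) (fun _ => norm_nonneg _) hT.le
    have h3 : 2 / ε * (∫ τ in (0:ℝ)..T, ‖F τ - ∑ i, (Circle.exp (l i * τ) : ℂ) • v i‖) ≤
      2 / ε * (ε / 8 * T) := by gcongr; exact h2.trans hP
    have h4 : 2 / ε * (ε / 8 * T) = T / 4 := by field_simp; norm_num
    linarith
  have hJ : 0 < t.card := by
    rw [Finset.card_pos]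
    by_contra h
    rw [Finset.not_nonempty_iff_eq_empty] at h
    obtain ⟨T, hT, hT0⟩ := (hmean.and (eventually_gt_atTop 0)).exists
    simp [h] at hT
    linarith
  set J : ℝ := ((t.card : ℕ) : ℝ) with hJdef
  have hJ1 : 1 ≤ J := by rw [hJdef]; exact_mod_cast hJ
  set η : ℝ := 1 / (96 * J ^ 2) with hη
  have hη0 : 0 < η := by positivity
  have hηJ : η ≤ 1 / (8 * J) := by
    rw [hη]; exact one_div_le_one_div_of_le (by positivity) (by nlinarith)
  have hq := fun c => bes_approx hFc hF (ψ c) (2 / ε) (by positivity) (hψL c) (hψ0 c) (hψ1 c) (hψc c) hη0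
  choose q hqt hqc hq2 hqa using hq
  have hqm := fun c => mean_prod hd (hqt c)
  choose a ha haa using hqm
  -- some mean is large
  have hbig : ∃ c ∈ t, 1 / (4 * J) ≤ ‖a c‖ := by
    by_contra! hcon
    have hev : ∀ c ∈ t, ∀ᶠ T : ℝ in atTop, ∫ τ in (0:ℝ)..T, ψ c (F τ) ≤ (1 / (4 * J) + η) * T := by
      intro c hc
      have h1 := (ha c).2.norm.eventually_lt_const (hcon c hc)
      filter_upwards [h1, hqa c, eventually_gt_atTop 0] with T h1 h2 hT
      have e1 : ‖∫ τ in (0:ℝ)..T, q c τ‖ ≤ 1 / (4 * J) * T := by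
        rw [norm_div, norm_real, Real.norm_eq_abs, abs_of_pos hT, div_lt_iff₀ hT] at h1
        exact h1.le
      have e2 : ‖(∫ τ in (0:ℝ)..T, (ψ c (F τ) : ℂ)) - ∫ τ in (0:ℝ)..T, q c τ‖ ≤ η * T := by
        rw [← intervalIntegral.integral_sub (Continuous.intervalIntegrable (by fun_prop) _ _)
          ((hqc c).intervalIntegrable _ _)]
        refine (intervalIntegral.norm_integral_le_integral_norm hT.le).trans ?_
        refine (integral_sub_le ?_ (fun _ => norm_nonneg _) hT.le).trans h2
        have := hqc c
        fun_prop
      rw [intervalIntegral.integral_ofReal] at e2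
      have e3 := norm_sub_norm_le ((∫ τ in (0:ℝ)..T, ψ c (F τ) : ℝ) : ℂ) (∫ τ in (0:ℝ)..T, q c τ)
      rw [norm_real] at e3
      have e4 := le_abs_self (∫ τ in (0:ℝ)..T, ψ c (F τ))
      rw [Real.norm_eq_abs] at e3
      linarith
    rw [← Filter.eventually_all_finset] at hev
    obtain ⟨T, ⟨hT1, hT2⟩, hT0⟩ := ((hev.and hmean).and (eventually_gt_atTop 0)).exists
    rw [intervalIntegral.integral_finsetSum
      (fun c _ => Continuous.intervalIntegrable (by fun_prop) _ _)] at hT2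
    have h3 := Finset.sum_le_sum hT1
    rw [Finset.sum_const, nsmul_eq_mul, ← hJdef] at h3
    have h4 : (1 / (4 * J) + η) * T ≤ (1 / (4 * J) + 1 / (8 * J)) * T := by gcongr
    have h5 : J * ((1 / (4 * J) + 1 / (8 * J)) * T) = 3 / 8 * T := by field_simp; norm_num
    have h6 : J * ((1 / (4 * J) + η) * T) ≤ 3 / 8 * T := by
      rw [← h5]; gcongr
    linarith
  obtain ⟨c, hc, hac⟩ := hbig
  have hacq := (haa c).2.norm
  have hlow : 1 / (16 * J ^ 2) ≤ ‖a c * a c‖ := by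
    rw [norm_mul]
    calc 1 / (16 * J ^ 2) = (1 / (4 * J)) * (1 / (4 * J)) := by field_simp; norm_num
      _ ≤ _ := by gcongr
  have hlow2 : 1 / (24 * J ^ 2) < ‖a c * a c‖ := lt_of_lt_of_le (by gcongr; norm_num) hlow
  have hev1 := hacq.eventually_const_lt hlow2
  have hqa' : ∀ᶠ T : ℝ in atTop, ∫ τ in (-(|d| * T))..(|d| * T), ‖(ψ c (F τ) : ℂ) - q c τ‖ ≤
      η * (|d| * T) :=
    (tendsto_id.const_mul_atTop (abs_pos.mpr hd0)).eventually (hqa c)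
  have hcq := hqc c
  have hcψ := hψc c
  refine ⟨1 / (96 * J ^ 2), by positivity, ?_⟩
  filter_upwards [hev1, hqa c, hqa', eventually_gt_atTop 0] with T h1 h2 h3 hT
  rw [norm_div, norm_real, Real.norm_eq_abs, abs_of_pos hT, lt_div_iff₀ hT] at h1
  have herr : ‖(∫ τ in (0:ℝ)..T, ((ψ c (F τ) * ψ c (F (d * τ)) : ℝ) : ℂ)) -
      ∫ τ in (0:ℝ)..T, q c τ * q c (d * τ)‖ ≤ 3 * η * T := by
    rw [← intervalIntegral.integral_sub (Continuous.intervalIntegrable (by fun_prop) _ _)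
          (Continuous.intervalIntegrable (by fun_prop) _ _)]
    refine (intervalIntegral.norm_integral_le_integral_norm hT.le).trans ?_
    have hb : ∀ τ, ‖((ψ c (F τ) * ψ c (F (d * τ)) : ℝ) : ℂ) - q c τ * q c (d * τ)‖ ≤
        ‖(ψ c (F τ) : ℂ) - q c τ‖ + 2 * ‖(ψ c (F (d * τ)) : ℂ) - q c (d * τ)‖ := by
      intro τ
      rw [show ((ψ c (F τ) * ψ c (F (d * τ)) : ℝ) : ℂ) - q c τ * q c (d * τ) =
        ((ψ c (F τ) : ℂ) - q c τ) * (ψ c (F (d * τ)) : ℂ) +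
          q c τ * ((ψ c (F (d * τ)) : ℂ) - q c (d * τ)) by push_cast; ring]
      refine (norm_add_le _ _).trans ?_
      rw [norm_mul, norm_mul]
      have : ‖(ψ c (F (d * τ)) : ℂ)‖ ≤ 1 := by
        rw [norm_real, Real.norm_eq_abs, abs_of_nonneg (hψ0 _ _)]; exact hψ1 _ _
      gcongr
      · exact mul_le_of_le_one_right (norm_nonneg _) this
      · exact hq2 c τ
    have hmono := intervalIntegral.integral_mono_on (a := 0) (b := T) (μ := volume) hT.le
      (f := fun τ => ‖((ψ c (F τ) * ψ c (F (d * τ)) : ℝ) : ℂ) - q c τ * q c (d * τ)‖)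
      (g := fun τ => ‖(ψ c (F τ) : ℂ) - q c τ‖ + 2 * ‖(ψ c (F (d * τ)) : ℂ) - q c (d * τ)‖)
      (Continuous.intervalIntegrable (by fun_prop) _ _)
      (Continuous.intervalIntegrable (by fun_prop) _ _) (fun τ _ => hb τ)
    refine hmono.trans ?_
    rw [intervalIntegral.integral_add (Continuous.intervalIntegrable (by fun_prop) _ _)
      (Continuous.intervalIntegrable (by fun_prop) _ _), intervalIntegral.integral_const_mul]
    have e1 := integral_sub_le (f := fun τ => ‖(ψ c (F τ) : ℂ) - q c τ‖) (by fun_prop)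
      (fun _ => norm_nonneg _) hT.le
    have e2 := integral_dil_le (f := fun τ => ‖(ψ c (F τ) : ℂ) - q c τ‖) (by fun_prop)
      (fun _ => norm_nonneg _) hd0 hT.le
    have e3 : |d|⁻¹ * (∫ τ in (-(|d| * T))..(|d| * T), ‖(ψ c (F τ) : ℂ) - q c τ‖) ≤
        |d|⁻¹ * (η * (|d| * T)) := by gcongr
    have hdp : 0 < |d| := abs_pos.mpr hd0
    have e4 : |d|⁻¹ * (η * (|d| * T)) = η * T := by field_simp
    linarith
  have hI : (1 / (96 * J ^ 2)) * T ≤ ∫ τ in (0:ℝ)..T, ψ c (F τ) * ψ c (F (d * τ)) := by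
    rw [intervalIntegral.integral_ofReal] at herr
    have e3 := norm_sub_norm_le (∫ τ in (0:ℝ)..T, q c τ * q c (d * τ))
      ((∫ τ in (0:ℝ)..T, ψ c (F τ) * ψ c (F (d * τ)) : ℝ) : ℂ)
    rw [norm_sub_rev, norm_real, Real.norm_eq_abs, abs_of_nonneg (a := ∫ τ in (0:ℝ)..T, _)
      (intervalIntegral.integral_nonneg hT.le (fun u _ => mul_nonneg (hψ0 _ _) (hψ0 _ _)))] at e3
    have e5 : 1 / (24 * J ^ 2) * T - 3 * η * T = 1 / (96 * J ^ 2) * T := by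
      rw [hη]; field_simp; norm_num
    linarith
  refine hI.trans ?_
  have hSo : IsOpen {τ : ℝ | ‖F (d * τ) - F τ‖ < ε} :=
    isOpen_lt (by fun_prop) continuous_const
  rw [intervalIntegral.integral_of_le hT.le, ← integral_Icc_eq_integral_Ioc]
  have hfin : volume ({τ : ℝ | ‖F (d * τ) - F τ‖ < ε} ∩ Set.Icc 0 T) ≠ ∞ :=
    ((measure_mono Set.inter_subset_right).trans_lt measure_Icc_lt_top).ne
  calc ∫ τ in Set.Icc 0 T, ψ c (F τ) * ψ c (F (d * τ))
      ≤ ∫ τ in Set.Icc 0 T, Set.indicator {τ : ℝ | ‖F (d * τ) - F τ‖ < ε} (fun _ => (1:ℝ)) τ := by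
        apply setIntegral_mono_on
        · exact Continuous.integrableOn_Icc (by fun_prop)
        · exact (integrableOn_const measure_Icc_lt_top.ne).indicator hSo.measurableSet
        · exact measurableSet_Icc
        · intro τ _
          by_cases h : τ ∈ {τ : ℝ | ‖F (d * τ) - F τ‖ < ε}
          · rw [Set.indicator_of_mem h]
            exact mul_le_one₀ (hψ1 _ _) (hψ0 _ _) (hψ1 _ _)
          · rw [Set.indicator_of_notMem h]
            simp only [Set.mem_ofPred_eq, not_lt] at h
            have tri := norm_sub_le_norm_sub_add_norm_sub (F (d * τ)) c (F τ)
            rw [norm_sub_rev c] at tri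
            have hz : ∀ x, ε / 2 ≤ ‖x - c‖ → ψ c x = 0 := by
              intro x hx
              apply max_eq_left
              have : 2 / ε * (ε / 2) ≤ 2 / ε * ‖x - c‖ := by gcongr
              have h2 : 2 / ε * (ε / 2) = 1 := by field_simp
              linarith
            rcases le_or_gt (ε / 2) ‖F τ - c‖ with h' | h'
            · rw [hz _ h']; simp
            · rw [hz (F (d * τ)) (by linarith)]; simp
    _ = (volume ({τ : ℝ | ‖F (d * τ) - F τ‖ < ε} ∩ Set.Icc 0 T)).toReal := by
        rw [integral_indicator hSo.measurableSet, Measure.restrict_restrict hSo.measurableSet]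
        simp [Measure.real]

lemma plancherel_le {h : ℝ → ℝ} (hi : Integrable h) (hi2 : Integrable (fun u => h u ^ 2))
    {b : ℝ} (hb : 0 < b) :
    Integrable (fun t : ℝ => Real.exp (-b * t ^ 2) * ‖∫ u : ℝ, cexp (I * t * u) * h u‖ ^ 2) ∧
    ∫ t : ℝ, Real.exp (-b * t ^ 2) * ‖∫ u : ℝ, cexp (I * t * u) * h u‖ ^ 2 ≤
      2 * Real.pi * ∫ u, h u ^ 2 := by
  set K : ℝ → ℝ := fun v => Real.sqrt (Real.pi / b) * Real.exp (-(1 / (4 * b)) * v ^ 2) with hK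
  have hK0 : ∀ v, 0 ≤ K v := fun v => by positivity
  have hKi : Integrable K := (integrable_exp_neg_mul_sq (by positivity)).const_mul _
  have hKint : ∫ v, K v = 2 * Real.pi := by
    simp only [hK]
    rw [integral_const_mul, integral_gaussian, ← Real.sqrt_mul (by positivity),
      show Real.pi / b * (Real.pi / (1 / (4 * b))) = (2 * Real.pi) ^ 2 by field_simp; norm_num,
      Real.sqrt_sq (by positivity)]
  have hG : ∀ v : ℝ, ∫ t : ℝ, cexp (I * v * t) * cexp (-(b : ℂ) * t ^ 2) = (K v : ℂ) := by
    intro v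
    rw [fourierIntegral_gaussian (by simpa using hb)]
    simp only [hK]
    push_cast
    congr 1
    · rw [Real.sqrt_eq_rpow, ofReal_cpow (by positivity)]; push_cast; rfl
    · congr 1; field_simp
  -- triple integrand
  let Φ : ℝ → ℝ × ℝ → ℂ := fun t z =>
    (cexp (-(b : ℂ) * t ^ 2)) * ((cexp (I * t * z.1) * h z.1) * (cexp (-(I * t * z.2)) * h z.2))
  have hsq : ∀ t : ℝ, ((Real.exp (-b * t ^ 2) * ‖∫ u : ℝ, cexp (I * t * u) * h u‖ ^ 2 : ℝ) : ℂ) =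
      ∫ z, Φ t z := by
    intro t
    simp only [Φ]
    rw [integral_const_mul, Measure.volume_eq_prod,
      integral_prod_mul (fun x : ℝ => cexp (I * t * x) * h x) (fun y : ℝ => cexp (-(I * t * y)) * h y)]
    push_cast
    congr 1
    rw [← Complex.mul_conj', ← integral_conj]
    congr 2
    ext u
    rw [map_mul, ← Complex.exp_conj, conj_ofReal]
    simp
  have hΦi : Integrable (Function.uncurry Φ) (volume.prod volume) := by
    have e1 : Integrable (fun z : ℝ × ℝ => h z.1 * h z.2) (volume.prod volume) := hi.mul_prod hi
    have e2 : Integrable (fun p : ℝ × (ℝ × ℝ) => Real.exp (-b * p.1 ^ 2) * (h p.2.1 * h p.2.2))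
        (volume.prod volume) := (integrable_exp_neg_mul_sq hb).mul_prod e1
    have e3 : Integrable (fun p : ℝ × (ℝ × ℝ) =>
        ((Real.exp (-b * p.1 ^ 2) * (h p.2.1 * h p.2.2) : ℝ) : ℂ)) (volume.prod volume) := e2.ofReal
    have e4 := e3.bdd_mul (c := 1) (f := fun p : ℝ × (ℝ × ℝ) => cexp (I * p.1 * (p.2.1 - p.2.2)))
      (Continuous.aestronglyMeasurable (by fun_prop)) (Eventually.of_forall fun p => by
        rw [show I * (p.1 : ℂ) * (p.2.1 - p.2.2) = ((p.1 * (p.2.1 - p.2.2) : ℝ) : ℂ) * I by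
          push_cast; ring, norm_exp_ofReal_mul_I])
    refine e4.congr (Eventually.of_forall fun p => ?_)
    simp only [Φ, Function.uncurry]
    rw [show I * (p.1 : ℂ) * (p.2.1 - p.2.2) = I * p.1 * p.2.1 + -(I * p.1 * p.2.2) by ring,
      Complex.exp_add]
    push_cast
    ring
  have hI1 : Integrable (fun t : ℝ => Real.exp (-b * t ^ 2) * ‖∫ u : ℝ, cexp (I * t * u) * h u‖ ^ 2) := by
    have := hΦi.integral_prod_left
    have e : (fun t : ℝ => Real.exp (-b * t ^ 2) * ‖∫ u : ℝ, cexp (I * t * u) * h u‖ ^ 2) =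
        fun t => (∫ z, Function.uncurry Φ (t, z)).re := by
      ext t
      have := hsq t
      simp only [Function.uncurry]
      rw [← this, ofReal_re]
    rw [e]
    exact this.re
  refine ⟨hI1, ?_⟩
  have hswap : ∫ t, ∫ z, Φ t z = ∫ z : ℝ × ℝ, ((h z.1 * h z.2 * K (z.1 - z.2) : ℝ) : ℂ) := by
    rw [integral_integral_swap hΦi]
    congr 1
    ext z
    have : ∀ t : ℝ, Φ t z = (h z.1 * h z.2 : ℂ) *
        (cexp (I * (z.1 - z.2 : ℝ) * t) * cexp (-(b : ℂ) * t ^ 2)) := by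
      intro t
      simp only [Φ]
      rw [show I * (z.1 - z.2 : ℝ) * (t : ℂ) = I * t * z.1 + -(I * t * z.2) by push_cast; ring,
        Complex.exp_add]
      ring
    simp_rw [this]
    rw [integral_const_mul, hG]
    push_cast; ring
  have hL : ((∫ t : ℝ, Real.exp (-b * t ^ 2) * ‖∫ u : ℝ, cexp (I * t * u) * h u‖ ^ 2 : ℝ) : ℂ) =
      ((∫ z : ℝ × ℝ, h z.1 * h z.2 * K (z.1 - z.2) : ℝ) : ℂ) := by
    rw [← integral_complex_ofReal, ← integral_complex_ofReal]
    simp_rw [hsq]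
    exact hswap
  rw [ofReal_inj] at hL
  rw [hL]
  have hA1 : Integrable (fun z : ℝ × ℝ => h z.2 ^ 2 * K (z.1 - z.2)) (volume.prod volume) := by
    simpa using hi2.convolution_integrand (ContinuousLinearMap.mul ℝ ℝ) hKi
  have hKs : ∀ v, K (-v) = K v := fun v => by simp [hK]
  have hA2 : Integrable (fun z : ℝ × ℝ => h z.1 ^ 2 * K (z.1 - z.2)) (volume.prod volume) := by
    refine hA1.swap.congr (Eventually.of_forall fun z => ?_)
    simp only [Function.comp, Prod.swap]
    rw [← hKs, neg_sub]
  have hi2' : ∫ z : ℝ × ℝ, h z.1 ^ 2 * K (z.1 - z.2) = 2 * Real.pi * ∫ u, h u ^ 2 := by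
    rw [Measure.volume_eq_prod, integral_prod _ hA2]
    simp_rw [integral_const_mul]
    simp_rw [integral_sub_left_eq_self (fun v => K v) volume]
    rw [hKint, integral_mul_const, mul_comm]
  have hi1' : ∫ z : ℝ × ℝ, h z.2 ^ 2 * K (z.1 - z.2) = 2 * Real.pi * ∫ u, h u ^ 2 := by
    rw [← hi2', Measure.volume_eq_prod, ← integral_prod_swap]
    congr 1
    ext z
    simp only [Prod.swap]
    rw [← hKs, neg_sub]
  have hmono : ∫ z : ℝ × ℝ, h z.1 * h z.2 * K (z.1 - z.2) ≤
      ∫ z : ℝ × ℝ, (1 / 2) * (h z.1 ^ 2 * K (z.1 - z.2) + h z.2 ^ 2 * K (z.1 - z.2)) := by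
    have hR : Integrable (fun z : ℝ × ℝ => (1 / 2) * (h z.1 ^ 2 * K (z.1 - z.2) +
      h z.2 ^ 2 * K (z.1 - z.2))) := (hA2.add hA1).const_mul _
    have hKc : Continuous K := by fun_prop
    have hp : ∀ x y k : ℝ, 0 ≤ k → |x * y * k| ≤ (1 / 2) * (x ^ 2 * k + y ^ 2 * k) := by
      intro x y k hk
      rw [abs_mul, abs_of_nonneg hk, abs_mul]
      nlinarith [mul_nonneg hk (sq_nonneg (|x| - |y|)), sq_abs x, sq_abs y]
    refine integral_mono (hR.mono' ?_ (Eventually.of_forall fun z => hp _ _ _ (hK0 _))) hR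
      (fun z => (le_abs_self _).trans (hp _ _ _ (hK0 _)))
    have e1 : Integrable (fun z : ℝ × ℝ => h z.1 * h z.2) (volume.prod volume) := hi.mul_prod hi
    exact e1.aestronglyMeasurable.mul (Continuous.aestronglyMeasurable (by fun_prop))
  refine hmono.trans ?_
  rw [Measure.volume_eq_prod] at hi1' hi2' ⊢
  rw [integral_const_mul, integral_add hA2 hA1, hi1', hi2']
  linarith

lemma locInt_of_bdd {f : ℝ → ℂ} (hf : Measurable f) {C : ℝ} (hC : ∀ t, ‖f t‖ ≤ C) (S : Set ℝ) :
    LocallyIntegrableOn f S := by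
  apply LocallyIntegrable.locallyIntegrableOn
  have : LocallyIntegrable (fun _ : ℝ => C) volume := locallyIntegrable_const C
  exact this.mono hf.aestronglyMeasurable
    (Eventually.of_forall fun t => (hC t).trans (le_abs_self C))

noncomputable def fr1 : ℝ → ℂ := Set.indicator (Set.Ioi 1) (fun t => ((Int.fract t : ℝ) : ℂ))

lemma fr1_meas : Measurable fr1 :=
  (Complex.measurable_ofReal.comp measurable_fract).indicator measurableSet_Ioi

lemma fract_norm_le (t : ℝ) : ‖((Int.fract t : ℝ) : ℂ)‖ ≤ 1 := by
  rw [Complex.norm_real, Real.norm_of_nonneg (Int.fract_nonneg t)]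
  exact (Int.fract_lt_one t).le

lemma fr1_bdd (t : ℝ) : ‖fr1 t‖ ≤ 1 := by
  unfold fr1
  exact (norm_indicator_le_norm_self _ _).trans (fract_norm_le t)

lemma fr1_top : fr1 =O[atTop] (fun t : ℝ => t ^ (-(0:ℝ))) := by
  simp only [neg_zero, Real.rpow_zero]
  exact Asymptotics.IsBigO.of_bound 1 (Eventually.of_forall fun t => by simpa using fr1_bdd t)

lemma fr1_bot (b : ℝ) : fr1 =O[nhdsWithin 0 (Set.Ioi 0)] (fun t : ℝ => t ^ (-b)) := by
  have : fr1 =ᶠ[nhdsWithin 0 (Set.Ioi 0)] (fun _ => 0) := by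
    have : ∀ᶠ t : ℝ in nhdsWithin 0 (Set.Ioi 0), t < 1 :=
      nhdsWithin_le_nhds (Iio_mem_nhds (by norm_num))
    filter_upwards [this] with t ht
    simp [fr1, ht.le]
  exact this.trans_isBigO (Asymptotics.isBigO_zero _ _)

lemma fr1_conv {s : ℂ} (hs : 0 < s.re) : MellinConvergent fr1 (-s) :=
  mellinConvergent_of_isBigO_rpow (a := 0) (b := -s.re - 1) (locInt_of_bdd fr1_meas fr1_bdd _)
    fr1_top (by simpa using hs) (fr1_bot _) (by simp)

lemma fr1_diff {s : ℂ} (hs : 0 < s.re) : DifferentiableAt ℂ (mellin fr1) (-s) :=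
  mellin_differentiableAt_of_isBigO_rpow (a := 0) (b := -s.re - 1) (locInt_of_bdd fr1_meas fr1_bdd _)
    fr1_top (by simpa using hs) (fr1_bot _) (by simp)

lemma zeta_gt_one {s : ℂ} (hs : 1 < s.re) :
    riemannZeta s = s / (s - 1) - s * mellin fr1 (-s) := by
  have h1 : LSeries 1 s = s * ∫ t in Set.Ioi (1 : ℝ), (∑ k ∈ Finset.Icc 1 ⌊t⌋₊, (1 : ℕ → ℂ) k) * t ^ (-(s + 1)) := by
    apply LSeries_eq_mul_integral' (r := 1) 1 zero_le_one hs
    apply Asymptotics.IsBigO.of_bound 1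
    exact Eventually.of_forall fun n => by simp
  rw [LSeries_one_eq_riemannZeta hs] at h1
  rw [h1]
  have hs1 : s - 1 ≠ 0 := by
    intro h
    have := congrArg Complex.re h
    simp at this; linarith
  have hre : (-s).re < -1 := by simpa using hs
  have e2 : ∫ t in Set.Ioi (1:ℝ), (t:ℂ) ^ (-s) = 1 / (s - 1) := by
    rw [integral_Ioi_cpow_of_lt hre zero_lt_one]
    simp
    rw [neg_add_eq_sub, ← neg_sub s 1, div_neg, neg_div, neg_neg, inv_eq_one_div]
  have i2 : IntegrableOn (fun t : ℝ => (t:ℂ) ^ (-s)) (Set.Ioi 1) :=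
    integrableOn_Ioi_cpow_of_lt hre zero_lt_one
  have e3 : mellin fr1 (-s) = ∫ t in Set.Ioi (1:ℝ), (t:ℂ) ^ (-s - 1) * ((Int.fract t : ℝ) : ℂ) := by
    unfold mellin
    rw [← integral_indicator measurableSet_Ioi, ← integral_indicator measurableSet_Ioi]
    congr 1
    ext t
    by_cases ht : 1 < t
    · have : 0 < t := by linarith
      simp [fr1, Set.indicator, ht, this]
    · simp [fr1, Set.indicator, ht]
  have i3 : IntegrableOn (fun t : ℝ => (t:ℂ) ^ (-s - 1) * ((Int.fract t : ℝ) : ℂ)) (Set.Ioi 1) := by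
    have := fr1_conv (s := s) (by linarith)
    refine IntegrableOn.congr_fun (this.mono_set (Set.Ioi_subset_Ioi zero_le_one)) ?_ measurableSet_Ioi
    intro t ht
    have : 1 < t := ht
    simp [fr1, Set.indicator, this]
  have e4 : ∫ t in Set.Ioi (1 : ℝ), (∑ k ∈ Finset.Icc 1 ⌊t⌋₊, (1 : ℕ → ℂ) k) * t ^ (-(s + 1))
      = (∫ t in Set.Ioi (1:ℝ), (t:ℂ) ^ (-s)) - ∫ t in Set.Ioi (1:ℝ), (t:ℂ) ^ (-s - 1) * ((Int.fract t : ℝ) : ℂ) := by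
    rw [← integral_sub i2 i3]
    apply setIntegral_congr_fun measurableSet_Ioi
    intro t ht
    have ht1 : 1 < t := ht
    have ht0 : (t:ℂ) ≠ 0 := by
      have : t ≠ 0 := by linarith
      exact_mod_cast this
    have hf : ((⌊t⌋₊ : ℝ)) = t - Int.fract t := by
      rw [natCast_floor_eq_intCast_floor (by linarith), Int.self_sub_fract]
    have hf' : ((⌊t⌋₊ : ℂ)) = t - (Int.fract t : ℝ) := by
      rw [← Complex.ofReal_sub, ← hf]; simp
    simp only [Pi.one_apply, Finset.sum_const, Nat.card_Icc, Nat.add_sub_cancel, nsmul_eq_mul, mul_one]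
    rw [hf', neg_add']
    have : (t:ℂ) ^ (-s) = t * (t:ℂ) ^ (-s - 1) := by
      rw [Complex.cpow_sub _ _ ht0, Complex.cpow_one]; field_simp
    rw [this]; ring
  rw [e4, e3, e2]; ring

lemma zeta_pos {s : ℂ} (hs : 0 < s.re) :
    (s - 1) * riemannZeta s = (s - 1) * (s / (s - 1) - s * mellin fr1 (-s)) ∨ s = 1 := by
  by_cases h1 : s = 1
  · exact Or.inr h1
  left
  have hU : IsOpen {s : ℂ | 0 < s.re} := isOpen_lt continuous_const Complex.continuous_re
  have hP : IsPreconnected {s : ℂ | 0 < s.re} := (convex_halfSpace_re_gt 0).isPreconnected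
  have hf : AnalyticOnNhd ℂ riemannZeta₁ {s : ℂ | 0 < s.re} :=
    DifferentiableOn.analyticOnNhd differentiable_riemannZeta₁.differentiableOn hU
  have hg : AnalyticOnNhd ℂ (fun s => s - (s - 1) * s * mellin fr1 (-s)) {s : ℂ | 0 < s.re} := by
    apply DifferentiableOn.analyticOnNhd _ hU
    intro z hz
    apply DifferentiableAt.differentiableWithinAt
    have : DifferentiableAt ℂ (fun s => mellin fr1 (-s)) z :=
      (fr1_diff hz).comp z differentiable_neg.differentiableAt
    fun_prop
  have key := hf.eqOn_of_preconnected_of_eventuallyEq hg hP (z₀ := 2) (by simp) (by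
    have : ∀ᶠ z : ℂ in nhds 2, 1 < z.re :=
      (isOpen_lt continuous_const Complex.continuous_re).mem_nhds (by simp)
    filter_upwards [this] with z hz
    have hz1 : z - 1 ≠ 0 := by
      intro h
      have := congrArg Complex.re h
      simp at this; linarith
    have e := riemannZeta_eq_inv_sub_mul (s := z) (sub_ne_zero.mp hz1)
    rw [zeta_gt_one hz] at e
    have : riemannZeta₁ z = (z - 1) * (z / (z - 1) - z * mellin fr1 (-z)) := by
      rw [e]; field_simp
    rw [this]; field_simp)
  have e := riemannZeta_eq_inv_sub_mul h1
  have hs1 := sub_ne_zero.mpr h1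
  have := key hs
  simp only at this
  rw [e, this]; field_simp

lemma fract_conv {s : ℂ} (hs : 0 < s.re) (hs1 : s.re < 1) :
    HasMellin (fun t : ℝ => ((Int.fract t : ℝ) : ℂ)) (-s) (-riemannZeta s / s) := by
  have hne : s ≠ 1 := by rintro rfl; simp at hs1
  have h1 := hasMellin_cpow_Ioc 1 (s := -s) (by simpa using hs1)
  have h2 := hasMellin_add h1.1 (fr1_conv hs)
  have e : Set.EqOn (fun t : ℝ => (t:ℂ) ^ (-s - 1) • (Set.indicator (Set.Ioc 0 1) (fun t : ℝ => (t:ℂ) ^ (1:ℂ)) t + fr1 t))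
      (fun t : ℝ => (t:ℂ) ^ (-s - 1) • ((Int.fract t : ℝ) : ℂ)) (Set.Ioi 0 \ {1}) := by
    intro t ht
    obtain ⟨ht0, ht1⟩ := ht
    have ht0' : 0 < t := ht0
    have ht1' : t ≠ 1 := ht1
    simp only
    congr 1
    rcases lt_or_gt_of_ne ht1' with h | h
    · have : Int.fract t = t := Int.fract_eq_self.mpr ⟨ht0'.le, h⟩
      simp [fr1, Set.indicator, ht0', h.le, this]
    · simp [fr1, Set.indicator, ht0', h]
  have ae : ∀ᵐ t : ℝ ∂(volume.restrict (Set.Ioi 0)), (t:ℂ) ^ (-s - 1) • (Set.indicator (Set.Ioc 0 1) (fun t : ℝ => (t:ℂ) ^ (1:ℂ)) t + fr1 t)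
      = (t:ℂ) ^ (-s - 1) • ((Int.fract t : ℝ) : ℂ) := by
    filter_upwards [ae_restrict_mem measurableSet_Ioi, ae_restrict_of_ae ((Set.countable_singleton (1:ℝ)).ae_notMem volume)] with t h1 h2
    exact e ⟨h1, h2⟩
  refine ⟨Integrable.congr h2.1 ae, ?_⟩
  have : mellin (fun t : ℝ => ((Int.fract t : ℝ) : ℂ)) (-s) = 1 / (-s + 1) + mellin fr1 (-s) := by
    rw [← h1.2, ← h2.2]
    exact (integral_congr_ae ae).symm
  rw [this]
  rcases zeta_pos hs with h | h
  · have hs1 := sub_ne_zero.mpr hne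
    have := mul_left_cancel₀ hs1 h
    have hs0 : s ≠ 0 := by rintro rfl; simp at hs
    have h3 : -s + 1 ≠ 0 := by intro h; apply hs1; linear_combination -h
    rw [this]; field_simp
    ring
  · exact absurd h hne

noncomputable def PN (N : ℕ) (s : ℂ) : ℂ := ∑ n ∈ Finset.Icc 1 N, (n : ℂ) ^ (-s)

noncomputable def gN (N : ℕ) (y : ℝ) : ℝ :=
  -Int.fract y - ∑ n ∈ Finset.Icc 1 N, if (n : ℝ) ≤ y then 1 else 0

noncomputable def DN (N : ℕ) (η y : ℝ) : ℝ := gN N (Real.exp η * y) - gN N y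

noncomputable def hN (N : ℕ) (η σ u : ℝ) : ℝ := Real.exp (σ * u) * DN N η (Real.exp (-u))

lemma ind_mellin {s : ℂ} (hs : 0 < s.re) {n : ℕ} (hn : 1 ≤ n) :
    HasMellin (fun y : ℝ => (if (n : ℝ) ≤ y then 1 else 0 : ℂ)) (-s) ((n : ℂ) ^ (-s) / s) := by
  have hn0 : (0:ℝ) < n := by exact_mod_cast hn
  have hre : (-s - 1).re < -1 := by simp; linarith
  have e : ∫ t in Set.Ioi (n:ℝ), (t:ℂ) ^ (-s - 1) = (n : ℂ) ^ (-s) / s := by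
    rw [integral_Ioi_cpow_of_lt hre hn0]
    simp [neg_div_neg_eq]
  have i : IntegrableOn (fun t : ℝ => (t:ℂ) ^ (-s - 1)) (Set.Ioi (n:ℝ)) :=
    integrableOn_Ioi_cpow_of_lt hre hn0
  have ae : (Set.Ioi (0:ℝ)).indicator (fun t : ℝ => (t:ℂ) ^ (-s - 1) • (if (n : ℝ) ≤ t then 1 else 0 : ℂ))
     =ᵐ[volume] (Set.Ioi (n:ℝ)).indicator (fun t : ℝ => (t:ℂ) ^ (-s - 1)) := by
    filter_upwards [(Set.countable_singleton (n:ℝ)).ae_notMem volume] with t ht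
    have ht : t ≠ n := ht
    rcases lt_or_gt_of_ne ht with h | h
    · simp [Set.indicator, h.le.not_gt, h.not_ge]
    · simp [Set.indicator, h, h.le, hn0.trans h]
  constructor
  · show IntegrableOn _ _ _
    rw [← integrable_indicator_iff measurableSet_Ioi] at i ⊢
    exact i.congr ae.symm
  · unfold mellin
    rw [← e, ← integral_indicator measurableSet_Ioi, ← integral_indicator measurableSet_Ioi]
    exact integral_congr_ae ae

lemma gN_mellin (N : ℕ) {s : ℂ} (hs : 0 < s.re) (hs1 : s.re < 1) :
    HasMellin (fun y => (gN N y : ℂ)) (-s) ((riemannZeta s - PN N s) / s) := by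
  induction N with
  | zero =>
    have h := fract_conv hs hs1
    have h2 := hasMellin_const_smul h.1 (-1 : ℂ)
    rw [h.2] at h2
    have e : (fun y => (gN 0 y : ℂ)) = fun t : ℝ => (-1 : ℂ) • ((Int.fract t : ℝ) : ℂ) := by
      ext t; simp [gN]
    have e2 : (riemannZeta s - PN 0 s) / s = (-1 : ℂ) • (-riemannZeta s / s) := by
      simp [PN, neg_div]
    rw [e, e2]
    exact h2
  | succ N ih =>
    have h := ind_mellin hs (n := N + 1) (by omega)
    have h2 := hasMellin_sub ih.1 h.1
    rw [ih.2, h.2] at h2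
    have e : (fun y => (gN (N+1) y : ℂ)) = fun t : ℝ => (gN N t : ℂ) - (if ((N + 1 : ℕ) : ℝ) ≤ t then 1 else 0 : ℂ) := by
      ext t; simp only [gN, Finset.sum_Icc_succ_top (show 1 ≤ N + 1 by omega)]
      push_cast
      split_ifs <;> push_cast <;> ring
    have e2 : (riemannZeta s - PN (N+1) s) / s = (riemannZeta s - PN N s) / s - ((N + 1 : ℕ) : ℂ) ^ (-s) / s := by
      simp only [PN, Finset.sum_Icc_succ_top (show 1 ≤ N + 1 by omega)]
      ring
    rw [e, e2]
    exact h2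

lemma DN_mellin (N : ℕ) (η : ℝ) {s : ℂ} (hs : 0 < s.re) (hs1 : s.re < 1) :
    mellin (fun y => (DN N η y : ℂ)) (-s) = (cexp (η * s) - 1) * ((riemannZeta s - PN N s) / s) := by
  have h := gN_mellin N hs hs1
  have h1 := mellin_comp_mul_left (fun y => (gN N y : ℂ)) (-s) (Real.exp_pos η)
  have c1 := (MellinConvergent.comp_mul_left (f := fun y => (gN N y : ℂ)) (s := -s) (Real.exp_pos η)).mpr h.1
  have := (hasMellin_sub c1 h.1).2
  rw [h1, h.2] at this
  have e : (fun y => (DN N η y : ℂ)) = fun t => ((gN N (Real.exp η * t) : ℝ) : ℂ) - (gN N t : ℂ) := by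
    ext t; simp [DN]
  have e3 : ((Real.exp η : ℝ) : ℂ) ^ s = cexp (η * s) := by
    rw [Complex.cpow_def_of_ne_zero (by exact_mod_cast (Real.exp_pos η).ne'), ← Complex.ofReal_log (Real.exp_pos η).le,
      Real.log_exp]
  rw [e, this, neg_neg, e3, smul_eq_mul]
  ring

lemma hN_fourier (N : ℕ) (η σ t : ℝ) (hs : 0 < σ) (hs1 : σ < 1) :
    ∫ u : ℝ, cexp (I * t * u) * hN N η σ u =
      (cexp (η * (σ + t * I)) - 1) * ((riemannZeta (σ + t * I) - PN N (σ + t * I)) / (σ + t * I)) := by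
  have h := DN_mellin N η (s := σ + t * I) (by simpa using hs) (by simpa using hs1)
  rw [← h, mellin_eq_fourier, Real.fourier_eq']
  congr 1
  ext u
  simp only [hN, smul_eq_mul, Complex.real_smul]
  simp
  left
  congr 1
  have : (Real.pi : ℂ) ≠ 0 := by exact_mod_cast Real.pi_ne_zero
  field_simp

lemma eabs_val {c : ℝ} (hc : 0 < c) : ∫ u : ℝ, Real.exp (-c * |u|) = 2 / c := by
  rw [integral_comp_abs (f := fun x => Real.exp (-c * x)), integral_exp_mul_Ioi (by linarith)]
  simp; field_simp

lemma eabs_int {c : ℝ} (hc : 0 < c) : Integrable (fun u : ℝ => Real.exp (-c * |u|)) := by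
  by_contra h
  have := eabs_val hc
  rw [integral_undef h] at this
  have : 0 < 2 / c := by positivity
  linarith

lemma gN_eq (N : ℕ) {y : ℝ} (hy : 0 ≤ y) : gN N y = -y + ((⌊y⌋₊ - N : ℕ) : ℝ) := by
  have h1 : ∑ n ∈ Finset.Icc 1 N, (if (n : ℝ) ≤ y then (1:ℝ) else 0) = ((min ⌊y⌋₊ N : ℕ) : ℝ) := by
    rw [Finset.sum_boole]
    congr 1
    have : (Finset.Icc 1 N).filter (fun n : ℕ => (n : ℝ) ≤ y) = Finset.Icc 1 (min ⌊y⌋₊ N) := by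
      ext n
      simp only [Finset.mem_filter, Finset.mem_Icc, ← Nat.le_floor_iff hy]
      omega
    rw [this]; simp
  have hf : ((⌊y⌋₊ : ℝ)) = y - Int.fract y := by
    rw [natCast_floor_eq_intCast_floor hy, Int.self_sub_fract]
  have h3 : (⌊y⌋₊ - N) + min ⌊y⌋₊ N = ⌊y⌋₊ := by omega
  have h4 : ((⌊y⌋₊ - N : ℕ) : ℝ) + ((min ⌊y⌋₊ N : ℕ) : ℝ) = ⌊y⌋₊ := by exact_mod_cast h3
  rw [gN, h1]
  linarith

lemma gN_bdd (N : ℕ) {y : ℝ} (hy : 0 < y) : |gN N y| ≤ (N + 1) * min 1 y := by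
  by_cases h : y < 1
  · rw [gN_eq N hy.le, Nat.floor_eq_zero.mpr h, min_eq_right h.le]
    simp [abs_of_pos hy]
    nlinarith [(Nat.cast_nonneg N : (0:ℝ) ≤ N)]
  · rw [min_eq_left (not_lt.mp h), mul_one, gN]
    have h0 : ∑ n ∈ Finset.Icc 1 N, (if (n : ℝ) ≤ y then (1:ℝ) else 0) ≤ N := by
      calc _ ≤ ∑ n ∈ Finset.Icc 1 N, (1:ℝ) := Finset.sum_le_sum fun i _ => by split_ifs <;> norm_num
        _ = N := by simp
    have h1 : 0 ≤ ∑ n ∈ Finset.Icc 1 N, (if (n : ℝ) ≤ y then (1:ℝ) else 0) :=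
      Finset.sum_nonneg fun i _ => by split_ifs <;> norm_num
    have h2 := Int.fract_nonneg y
    have h3 := Int.fract_lt_one y
    rw [abs_le]; constructor <;> linarith

lemma gN_meas (N : ℕ) : Measurable (gN N) := by
  unfold gN
  apply Measurable.sub measurable_fract.neg
  apply Finset.measurable_sum
  intro i _
  exact Measurable.ite measurableSet_Ici measurable_const measurable_const

lemma hN_meas (N : ℕ) (η σ : ℝ) : Measurable (hN N η σ) := by
  have := gN_meas N
  unfold hN DN
  fun_prop

lemma hN_bdd (N : ℕ) {η σ : ℝ} (hη : 0 ≤ η) (hσ : 1/2 < σ) (hσ1 : σ < 1) (u : ℝ) :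
    |hN N η σ u| ≤ (N + 1) * (Real.exp η + 1) * Real.exp (-(1 - σ) * |u|) := by
  have hk : 1 ≤ Real.exp η := Real.one_le_exp hη
  have hN0 : (0:ℝ) ≤ N := Nat.cast_nonneg N
  have hm : ∀ y : ℝ, 0 < y → |DN N η y| ≤ (N + 1) * (Real.exp η + 1) * min 1 y := by
    intro y hy
    have h1 := gN_bdd N hy
    have h2 := gN_bdd N (mul_pos (Real.exp_pos η) hy)
    have h3 : min 1 (Real.exp η * y) ≤ Real.exp η * min 1 y := by
      rcases le_total 1 y with h | h
      · rw [min_eq_left h]; exact (min_le_left _ _).trans (by linarith)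
      · rw [min_eq_right h]; exact min_le_right _ _
    unfold DN
    calc _ ≤ |gN N (Real.exp η * y)| + |gN N y| := abs_sub _ _
      _ ≤ (N + 1) * (Real.exp η * min 1 y) + (N + 1) * min 1 y :=
        add_le_add (h2.trans (by gcongr)) h1
      _ = _ := by ring
  have h1 := hm _ (Real.exp_pos (-u))
  have h2 : Real.exp (σ * u) * min 1 (Real.exp (-u)) ≤ Real.exp (-(1 - σ) * |u|) := by
    rcases le_total 0 u with h | h
    · calc _ ≤ Real.exp (σ * u) * Real.exp (-u) := by gcongr; exact min_le_right _ _
        _ = Real.exp (-(1 - σ) * |u|) := by rw [← Real.exp_add, abs_of_nonneg h]; ring_nf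
    · calc _ ≤ Real.exp (σ * u) * 1 := by gcongr; exact min_le_left _ _
        _ ≤ Real.exp (-(1 - σ) * |u|) := by
          rw [mul_one, Real.exp_le_exp, abs_of_nonpos h]; nlinarith
  unfold hN
  rw [abs_mul, abs_of_pos (Real.exp_pos _)]
  calc _ ≤ Real.exp (σ * u) * ((N + 1) * (Real.exp η + 1) * min 1 (Real.exp (-u))) := by gcongr
    _ = (N + 1) * (Real.exp η + 1) * (Real.exp (σ * u) * min 1 (Real.exp (-u))) := by ring
    _ ≤ _ := by gcongr

lemma hN_int (N : ℕ) {η σ : ℝ} (hη : 0 ≤ η) (hσ : 1/2 < σ) (hσ1 : σ < 1) :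
    Integrable (hN N η σ) :=
  ((eabs_int (show 0 < 1 - σ by linarith)).const_mul ((N + 1) * (Real.exp η + 1))).mono'
    (hN_meas N η σ).aestronglyMeasurable (Eventually.of_forall (hN_bdd N hη hσ hσ1))

lemma hN_int2 (N : ℕ) {η σ : ℝ} (hη : 0 ≤ η) (hσ : 1/2 < σ) (hσ1 : σ < 1) :
    Integrable (fun u => hN N η σ u ^ 2) := by
  refine ((eabs_int (show 0 < 2 * (1 - σ) by linarith)).const_mul (((N + 1) * (Real.exp η + 1)) ^ 2)).mono'
    ((hN_meas N η σ).pow_const 2).aestronglyMeasurable (Eventually.of_forall fun u => ?_)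
  rw [Real.norm_of_nonneg (sq_nonneg _), ← sq_abs]
  calc _ ≤ ((N + 1) * (Real.exp η + 1) * Real.exp (-(1 - σ) * |u|)) ^ 2 := by
        gcongr; exact hN_bdd N hη hσ hσ1 u
    _ = _ := by rw [mul_pow, ← Real.exp_nat_mul]; push_cast; ring_nf

lemma DN_sq (N : ℕ) {η y : ℝ} (hη : 0 < η) (hη2 : η ≤ 1/2) (hN : 2 * η * N ≤ 1) (hy : 0 < y) :
    DN N η y ^ 2 ≤ min ((2 * η * y) ^ 2) 1 ∨
      (DN N η y ^ 2 ≤ 1 ∧ ∃ n : ℕ, N < n ∧ y < n ∧ (n:ℝ) ≤ Real.exp η * y) := by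
  have hk := Real.abs_exp_sub_one_le (x := η) (by rw [abs_of_pos hη]; linarith)
  have hk1 : η + 1 ≤ Real.exp η := Real.add_one_le_exp η
  rw [abs_of_pos hη, abs_of_nonneg (by linarith)] at hk
  set k := Real.exp η with hkdef
  have hky : y ≤ k * y := by nlinarith
  have hfl : ⌊y⌋₊ ≤ ⌊k * y⌋₊ := Nat.floor_mono hky
  by_cases h : 2 * η * y ≤ 1
  · have hsq : (2 * η * y) ^ 2 ≤ 1 := by
      have : 0 ≤ 2 * η * y := by positivity
      nlinarith
    rw [min_eq_left hsq]
    have hb : (k - 1) * y ≤ 2 * η * y := by nlinarith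
    have hb0 : 0 ≤ (k - 1) * y := by nlinarith
    have hD : DN N η y = -((k - 1) * y) + (((⌊k * y⌋₊ - N : ℕ) : ℝ) - ((⌊y⌋₊ - N : ℕ) : ℝ)) := by
      rw [DN, gN_eq N hy.le, gN_eq N (by linarith)]; ring
    have hfl2 : ⌊k * y⌋₊ ≤ ⌊y⌋₊ + 1 := by
      rw [← Nat.floor_add_one hy.le]; exact Nat.floor_mono (by linarith)
    by_cases hc : ⌊k * y⌋₊ - N = ⌊y⌋₊ - N
    · left
      rw [hD, hc, sub_self, add_zero, neg_sq]
      gcongr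
    · right
      have e1 : ⌊k * y⌋₊ - N = ⌊y⌋₊ - N + 1 := by omega
      rw [hD, e1]
      constructor
      · push_cast; nlinarith
      · refine ⟨⌊k * y⌋₊, by omega, ?_, Nat.floor_le (by linarith)⟩
        have : ⌊k * y⌋₊ = ⌊y⌋₊ + 1 := by omega
        rw [this]; push_cast; exact Nat.lt_floor_add_one y
  · left
    have hyN : (N:ℝ) ≤ y := by
      by_contra h'
      push Not at h'
      exact h (by nlinarith)
    have hN1 : N ≤ ⌊y⌋₊ := Nat.le_floor hyN
    have hN2 : N ≤ ⌊k * y⌋₊ := hN1.trans hfl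
    have hsq : 1 ≤ (2 * η * y) ^ 2 := by
      push Not at h; nlinarith
    rw [min_eq_right hsq]
    rw [DN, gN_eq N hy.le, gN_eq N (by linarith), Nat.cast_sub hN1, Nat.cast_sub hN2]
    have a1 := Nat.floor_le hy.le
    have a2 := Nat.lt_floor_add_one y
    have a3 := Nat.floor_le (show 0 ≤ k * y by linarith)
    have a4 := Nat.lt_floor_add_one (k * y)
    rw [sq_le_one_iff_abs_le_one, abs_le]
    constructor <;> linarith

lemma G2_le {η σ a b : ℝ} (hη : 0 < η) (hη2 : η ≤ 1/2) (ha : 1/2 < a) (hb : b < 1) (hab : a ≤ σ) (hσb : σ ≤ b) (u : ℝ) :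
    Real.exp (2 * σ * u) * min ((2 * η * Real.exp (-u)) ^ 2) 1 ≤
      (2 * η) ^ (2 * a) * Real.exp (-(2 - 2 * b) * |u - Real.log (2 * η)|) := by
  have h2 : 0 < 2 * η := by positivity
  set l := Real.log (2 * η) with hl
  have hl0 : l ≤ 0 := Real.log_nonpos h2.le (by linarith)
  have e1 : (2 * η) ^ (2 * a) = Real.exp (2 * a * l) := by
    rw [Real.rpow_def_of_pos h2, mul_comm]
  have e2 : (2 * η * Real.exp (-u)) ^ 2 = Real.exp (2 * l - 2 * u) := by
    have : 2 * η = Real.exp l := (Real.exp_log h2).symm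
    rw [this, ← Real.exp_add, ← Real.exp_nat_mul]; push_cast; ring_nf
  rw [e1, e2, ← Real.exp_add]
  rcases le_total 0 (u - l) with h | h
  · calc _ ≤ Real.exp (2 * σ * u) * Real.exp (2 * l - 2 * u) := by gcongr; exact min_le_left _ _
      _ ≤ _ := by
        rw [← Real.exp_add, Real.exp_le_exp, abs_of_nonneg h]
        nlinarith
  · calc _ ≤ Real.exp (2 * σ * u) * 1 := by gcongr; exact min_le_right _ _
      _ ≤ _ := by
        rw [mul_one, Real.exp_le_exp, abs_of_nonpos h]
        nlinarith

lemma hN_L2 (N : ℕ) {η σ a b : ℝ} (hη : 0 < η) (hη2 : η ≤ 1/2) (hN' : 2 * η * N ≤ 1)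
    (ha : 1/2 < a) (hb : b < 1) (hab : a ≤ σ) (hσb : σ ≤ b) :
    ∫ u, hN N η σ u ^ 2 ≤
      3 * η * (∑' n : ℕ, ((n + (N + 1) : ℕ) : ℝ) ^ (-(2 * a))) + 2 / (2 - 2 * b) * (2 * η) ^ (2 * a) := by
  set c := 2 - 2 * b with hc
  have hc0 : 0 < c := by rw [hc]; linarith
  set l := Real.log (2 * η) with hl
  have hS : Summable (fun n : ℕ => ((n + (N + 1) : ℕ) : ℝ) ^ (-(2 * a))) := by
    have := Real.summable_nat_rpow.mpr (show -(2 * a) < -1 by linarith)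
    exact (summable_nat_add_iff (N + 1)).mpr this
  have hG : Integrable (fun u : ℝ => (2 * η) ^ (2 * a) * Real.exp (-c * |u - l|)) :=
    ((eabs_int hc0).comp_sub_right l).const_mul _
  have hGv : ∫ u : ℝ, (2 * η) ^ (2 * a) * Real.exp (-c * |u - l|) = 2 / c * (2 * η) ^ (2 * a) := by
    rw [integral_const_mul, integral_sub_right_eq_self (fun u => Real.exp (-c * |u|)) l, eabs_val hc0]; ring
  have hpt : ∀ u : ℝ, ENNReal.ofReal (hN N η σ u ^ 2) ≤
      (∑' n : ℕ, (Set.Icc (-Real.log ((n + (N + 1) : ℕ) : ℝ)) (η - Real.log ((n + (N + 1) : ℕ) : ℝ))).indicator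
        (fun _ => ENNReal.ofReal (3 * ((n + (N + 1) : ℕ) : ℝ) ^ (-(2 * a)))) u) +
      ENNReal.ofReal ((2 * η) ^ (2 * a) * Real.exp (-c * |u - l|)) := by
    intro u
    have hh : hN N η σ u ^ 2 = Real.exp (2 * σ * u) * DN N η (Real.exp (-u)) ^ 2 := by
      rw [hN, mul_pow, ← Real.exp_nat_mul]; push_cast; ring_nf
    rcases DN_sq N hη hη2 hN' (Real.exp_pos (-u)) with h | ⟨h, n, hn, h1, h2⟩
    · refine le_trans ?_ le_add_self
      apply ENNReal.ofReal_le_ofReal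
      refine le_trans ?_ (G2_le hη hη2 ha hb hab hσb u)
      rw [hh]; gcongr
    · refine le_trans ?_ le_self_add
      obtain ⟨m, rfl⟩ : ∃ m, n = m + (N + 1) := ⟨n - (N + 1), by omega⟩
      refine le_trans ?_ (ENNReal.le_tsum m)
      have hn0 : (0:ℝ) < ((m + (N + 1) : ℕ) : ℝ) := by exact_mod_cast (by omega)
      have hn1 : (1:ℝ) ≤ ((m + (N + 1) : ℕ) : ℝ) := by exact_mod_cast (by omega)
      have hl0 := Real.log_nonneg hn1
      have u1 : -Real.log ((m + (N + 1) : ℕ) : ℝ) ≤ u := by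
        have := (Real.lt_log_iff_exp_lt hn0).mpr h1
        linarith
      have u2 : u ≤ η - Real.log ((m + (N + 1) : ℕ) : ℝ) := by
        rw [← Real.exp_add] at h2
        have := (Real.log_le_iff_le_exp hn0).mpr h2
        linarith
      rw [Set.indicator_of_mem (Set.mem_Icc.mpr ⟨u1, u2⟩)]
      apply ENNReal.ofReal_le_ofReal
      rw [hh]
      calc _ ≤ Real.exp (2 * σ * u) * 1 := by gcongr
        _ ≤ Real.exp (1 + (Real.log ((m + (N + 1) : ℕ) : ℝ)) * (-(2 * a))) := by
          rw [mul_one, Real.exp_le_exp]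
          nlinarith
        _ = Real.exp 1 * ((m + (N + 1) : ℕ) : ℝ) ^ (-(2 * a)) := by
          rw [Real.exp_add, Real.rpow_def_of_pos hn0]
        _ ≤ _ := by
          gcongr
          exact Real.exp_one_lt_d9.le.trans (by norm_num)
  rw [integral_eq_lintegral_of_nonneg_ae (Eventually.of_forall fun u => sq_nonneg _)
    ((hN_meas N η σ).pow_const 2).aestronglyMeasurable]
  have hT0 : 0 ≤ ∑' n : ℕ, ((n + (N + 1) : ℕ) : ℝ) ^ (-(2 * a)) := tsum_nonneg fun n => by positivity
  apply ENNReal.toReal_le_of_le_ofReal (by positivity)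
  refine (lintegral_mono hpt).trans ?_
  rw [lintegral_add_left, lintegral_tsum, ENNReal.ofReal_add (by positivity) (by positivity), ← hGv,
    ofReal_integral_eq_lintegral_ofReal hG (Eventually.of_forall fun u => by positivity)]
  · gcongr
    rw [← tsum_mul_left, ENNReal.ofReal_tsum_of_nonneg (fun n => by positivity) (hS.mul_left _)]
    gcongr with n
    rw [lintegral_indicator_const measurableSet_Icc, Real.volume_Icc, ← ENNReal.ofReal_mul (by positivity)]
    apply ENNReal.ofReal_le_ofReal
    apply le_of_eq; ring
  · intro n
    exact (measurable_const.indicator measurableSet_Icc).aemeasurable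
  · apply Measurable.tsum
    intro n
    exact (measurable_const.indicator measurableSet_Icc)

lemma rpow_lt_littleO {p q : ℝ} (h : p < q) :
    (fun x : ℝ => x ^ p) =o[atTop] fun x : ℝ => x ^ q := by
  rw [Asymptotics.isLittleO_iff_tendsto']
  · refine (tendsto_rpow_neg_atTop (sub_pos.mpr h)).congr' ?_
    filter_upwards [eventually_gt_atTop 0] with x hx
    rw [← Real.rpow_sub hx]; ring_nf
  · filter_upwards [eventually_gt_atTop 0] with x hx h0
    exact absurd h0 (Real.rpow_pos_of_pos hx q).ne'

lemma PN_diff (N : ℕ) : Differentiable ℂ (PN N) := by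
  unfold PN
  apply Differentiable.fun_sum
  intro n hn
  have hn0 : (n:ℂ) ≠ 0 := by
    have := (Finset.mem_Icc.mp hn).1
    exact_mod_cast (by omega)
  intro s
  exact (differentiableAt_id.neg).const_cpow (Or.inl hn0)

lemma zP_diff (N : ℕ) {s : ℂ} (hs : s.re < 1) :
    DifferentiableAt ℂ (fun s => riemannZeta s - PN N s) s := by
  have hne : s ≠ 1 := by rintro rfl; simp at hs
  exact (differentiableAt_riemannZeta hne).sub (PN_diff N s)

lemma zP_cont (N : ℕ) {σ : ℝ} (hs : σ < 1) :
    Continuous (fun t : ℝ => riemannZeta (σ + t * I) - PN N (σ + t * I)) := by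
  rw [continuous_iff_continuousAt]
  intro t
  have h := (zP_diff N (s := σ + t * I) (by simpa using hs)).continuousAt
  exact ContinuousAt.comp (f := fun t : ℝ => (σ + t * I : ℂ)) h (by fun_prop)

lemma ms_bound (N : ℕ) {σ a b T : ℝ} (ha : 1/2 < a) (hb : b < 1) (hab : a ≤ σ) (hσb : σ ≤ b)
    (hT1 : 1 ≤ T) (hTN : N ≤ T) :
    ∫ t in (-T)..T, ‖riemannZeta (σ + t * I) - PN N (σ + t * I)‖ ^ 2 ≤
      8 * Real.pi * Real.exp 1 * (6 * (∑' n : ℕ, ((n + (N + 1) : ℕ) : ℝ) ^ (-(2 * a))) * (T + 1)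
        + 8 / (2 - 2 * b) * (T + 1) ^ (2 - 2 * a)) := by
  set η : ℝ := 1 / (2 * (T + 1)) with hηd
  have hη : 0 < η := by positivity
  have hη2 : 2 * η * (T + 1) = 1 := by rw [hηd]; field_simp
  have hη3 : η ≤ 1/2 := by nlinarith
  have hηN : 2 * η * N ≤ 1 := by nlinarith
  have hσ0 : 1/2 < σ := by linarith
  have hσ1 : σ < 1 := by linarith
  set β : ℝ := 1 / T ^ 2 with hβ
  have hT0 : 0 < T := by linarith
  have hβ0 : 0 < β := by positivity
  obtain ⟨pi1, pi2⟩ := plancherel_le (hN_int N hη.le hσ0 hσ1) (hN_int2 N hη.le hσ0 hσ1) hβ0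
  have hL2 := hN_L2 N hη hη3 hηN ha hb hab hσb
  set S := ∑' n : ℕ, ((n + (N + 1) : ℕ) : ℝ) ^ (-(2 * a)) with hS
  set W : ℝ → ℝ := fun t => Real.exp (-β * t ^ 2) * ‖∫ u : ℝ, cexp (I * t * u) * hN N η σ u‖ ^ 2 with hW
  have hpt : ∀ t ∈ Set.Icc (-T) T, ‖riemannZeta (σ + t * I) - PN N (σ + t * I)‖ ^ 2 ≤
      4 / η ^ 2 * Real.exp 1 * W t := by
    intro t ht
    have habs : |t| ≤ T := abs_le.mpr ht
    simp only [hW]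
    rw [hN_fourier N η σ t (by linarith) hσ1]
    set s : ℂ := σ + t * I with hs
    set f := riemannZeta s - PN N s with hf
    have hsn : ‖s‖ ≤ T + 1 := by
      calc ‖s‖ ≤ ‖(σ:ℂ)‖ + ‖(t:ℂ) * I‖ := norm_add_le _ _
        _ = |σ| + |t| := by simp
        _ ≤ 1 + T := by rw [abs_of_pos (by linarith)]; linarith
        _ = T + 1 := by ring
    have hs0 : 0 < ‖s‖ := by
      rw [norm_pos_iff]; intro h
      have := congrArg Complex.re h
      simp [hs] at this; linarith
    have hηs : ‖(η:ℂ) * s‖ = η * ‖s‖ := by rw [norm_mul, Complex.norm_real, Real.norm_of_nonneg hη.le]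
    have hle : η * ‖s‖ ≤ 1/2 := by nlinarith
    have h1 := Complex.norm_exp_sub_one_sub_id_le (x := (η:ℂ) * s) (by rw [hηs]; linarith)
    rw [hηs] at h1
    have h2 : η * ‖s‖ / 2 ≤ ‖cexp (η * s) - 1‖ := by
      have h3 : ‖(η:ℂ) * s‖ - ‖cexp (η * s) - 1‖ ≤ ‖cexp (η * s) - 1 - η * s‖ := by
        rw [norm_sub_rev (cexp (η * s) - 1)]; exact norm_sub_norm_le _ _
      rw [hηs] at h3
      have hx : 0 ≤ η * ‖s‖ := by positivity
      have hx2 : (η * ‖s‖) ^ 2 ≤ 1/2 * (η * ‖s‖) := by nlinarith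
      linarith
    have h4 : η / 2 * ‖f‖ ≤ ‖(cexp (η * s) - 1) * (f / s)‖ := by
      rw [norm_mul, norm_div]
      calc η / 2 * ‖f‖ = (η * ‖s‖ / 2) * (‖f‖ / ‖s‖) := by field_simp
        _ ≤ _ := by gcongr
    have h5 : 1 ≤ Real.exp 1 * Real.exp (-β * t ^ 2) := by
      rw [← Real.exp_add]
      apply Real.one_le_exp
      have : t ^ 2 ≤ T ^ 2 := sq_le_sq' ht.1 ht.2
      have : β * t ^ 2 ≤ 1 := by
        rw [hβ, one_div, inv_mul_le_iff₀ (by positivity)]; linarith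
      linarith
    have h6 : (η / 2 * ‖f‖) ^ 2 ≤ ‖(cexp (η * s) - 1) * (f / s)‖ ^ 2 := by gcongr
    calc ‖f‖ ^ 2 = 4 / η ^ 2 * (η / 2 * ‖f‖) ^ 2 := by field_simp; norm_num
      _ ≤ 4 / η ^ 2 * ‖(cexp (η * s) - 1) * (f / s)‖ ^ 2 := by gcongr
      _ = 4 / η ^ 2 * 1 * ‖(cexp (η * s) - 1) * (f / s)‖ ^ 2 := by ring
      _ ≤ 4 / η ^ 2 * (Real.exp 1 * Real.exp (-β * t ^ 2)) * ‖(cexp (η * s) - 1) * (f / s)‖ ^ 2 := by gcongr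
      _ = _ := by ring
  have hcont := (zP_cont N hσ1).norm.pow 2
  have hWi : Integrable W := pi1
  have hW0 : ∀ t, 0 ≤ W t := fun t => by simp only [hW]; positivity
  calc ∫ t in (-T)..T, ‖riemannZeta (σ + t * I) - PN N (σ + t * I)‖ ^ 2
      ≤ ∫ t in (-T)..T, 4 / η ^ 2 * Real.exp 1 * W t :=
        intervalIntegral.integral_mono_on (by linarith) (hcont.intervalIntegrable _ _)
          ((hWi.const_mul _).intervalIntegrable) hpt
    _ = 4 / η ^ 2 * Real.exp 1 * ∫ t in (-T)..T, W t := by rw [intervalIntegral.integral_const_mul]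
    _ ≤ 4 / η ^ 2 * Real.exp 1 * ∫ t, W t := by
        gcongr
        rw [intervalIntegral.integral_of_le (by linarith)]
        exact setIntegral_le_integral hWi (Eventually.of_forall hW0)
    _ ≤ 4 / η ^ 2 * Real.exp 1 * (2 * Real.pi * (3 * η * S + 2 / (2 - 2 * b) * (2 * η) ^ (2 * a))) := by
        gcongr
        exact pi2.trans (by gcongr)
    _ = _ := by
        have h2η : 2 * η = (T + 1)⁻¹ := by rw [hηd]; field_simp
        have hη' : 1 / η = 2 * (T + 1) := by rw [hηd]; field_simp
        have e1 : (T + 1) ^ (2 - 2 * a) = (T + 1) ^ 2 * (2 * η) ^ (2 * a) := by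
          rw [h2η, Real.inv_rpow (by linarith), Real.rpow_sub (by linarith)]
          norm_cast
        rw [e1]
        have e2 : T + 1 = 1 / η / 2 := by rw [hη']; ring
        rw [e2]
        field_simp
        ring

lemma zeta_L1 {a b : ℝ} (ha : 1/2 < a) (hb : b < 1) {δ : ℝ} (hδ : 0 < δ) :
    ∃ N : ℕ, ∀ᶠ T : ℝ in atTop, ∀ σ, a ≤ σ → σ ≤ b →
      ∫ t in (-T)..T, ‖riemannZeta (σ + t * I) - PN N (σ + t * I)‖ ≤ δ * T := by
  set C := 8 * Real.pi * Real.exp 1 with hC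
  have hC0 : 0 < C := by positivity
  have hS := tendsto_sum_nat_add (fun n : ℕ => (n : ℝ) ^ (-(2 * a)))
  have hS2 := (hS.comp (tendsto_add_atTop_nat 1)).eventually (gt_mem_nhds (show 0 < δ ^ 2 / (32 * C * 6 * 2) by positivity))
  obtain ⟨N, hN⟩ := hS2.exists
  refine ⟨N, ?_⟩
  simp only [Function.comp] at hN
  set S := ∑' n : ℕ, ((n + (N + 1) : ℕ) : ℝ) ^ (-(2 * a)) with hSd
  have hp : ∀ᶠ T : ℝ in atTop, C * (8 / (2 - 2 * b) * (T + 1) ^ (2 - 2 * a)) ≤ δ ^ 2 / 64 * (T + 1) := by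
    have h := (rpow_lt_littleO (show 2 - 2 * a < 1 by linarith)).def
      (show 0 < δ ^ 2 / 64 / (C * (8 / |2 - 2 * b|) + 1) by positivity)
    have h' := (tendsto_atTop_add_const_right atTop (1:ℝ) tendsto_id).eventually h
    filter_upwards [h', eventually_ge_atTop 1] with T hT hT1
    simp only [id, Real.rpow_one] at hT
    have hb' : 0 < 2 - 2 * b := by linarith
    rw [Real.norm_of_nonneg (by positivity), Real.norm_of_nonneg (by positivity), abs_of_pos hb'] at hT
    have hD : 0 < C * (8 / (2 - 2 * b)) := by positivity
    calc C * (8 / (2 - 2 * b) * (T + 1) ^ (2 - 2 * a)) = C * (8 / (2 - 2 * b)) * (T + 1) ^ (2 - 2 * a) := by ring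
      _ ≤ (C * (8 / (2 - 2 * b)) + 1) * (T + 1) ^ (2 - 2 * a) := by gcongr; linarith
      _ ≤ (C * (8 / (2 - 2 * b)) + 1) * (δ ^ 2 / 64 / (C * (8 / (2 - 2 * b)) + 1) * (T + 1)) := by gcongr
      _ = _ := by
        have hE : C * (8 / (2 - 2 * b)) + 1 ≠ 0 := by positivity
        generalize C * (8 / (2 - 2 * b)) + 1 = E at hE
        field_simp
  filter_upwards [hp, eventually_ge_atTop 1, eventually_ge_atTop (N:ℝ)] with T hT hT1 hTN σ hσ1 hσ2
  have hms := ms_bound N ha hb hσ1 hσ2 hT1 hTN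
  rw [← hC, ← hSd] at hms
  have hms2 : ∫ t in (-T)..T, ‖riemannZeta (σ + t * I) - PN N (σ + t * I)‖ ^ 2 ≤ δ ^ 2 / 8 * T := by
    have hq : C * (6 * S * (T + 1)) ≤ δ ^ 2 / 64 * (T + 1) := by
      have : C * (6 * S) ≤ δ ^ 2 / 64 := by
        calc C * (6 * S) ≤ C * (6 * (δ ^ 2 / (32 * C * 6 * 2))) := by gcongr
          _ = _ := by field_simp; norm_num
      nlinarith
    nlinarith [sq_nonneg δ]
  have hcont := (zP_cont N (σ := σ) (by linarith)).norm
  calc ∫ t in (-T)..T, ‖riemannZeta (σ + t * I) - PN N (σ + t * I)‖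
      ≤ ∫ t in (-T)..T, (4 / δ * ‖riemannZeta (σ + t * I) - PN N (σ + t * I)‖ ^ 2 + δ / 4) := by
        apply intervalIntegral.integral_mono_on (by linarith) (hcont.intervalIntegrable _ _)
        · exact (((hcont.pow 2).const_mul _).add continuous_const).intervalIntegrable _ _
        · intro t _
          set x := ‖riemannZeta (σ + t * I) - PN N (σ + t * I)‖
          have : 4 / δ * x ^ 2 + δ / 4 - x = (4 / δ) * ((x - δ / 8) ^ 2 + 3 * δ ^ 2 / 64) := by
            field_simp; ring
          have h2 : 0 ≤ (4 / δ) * ((x - δ / 8) ^ 2 + 3 * δ ^ 2 / 64) := by positivity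
          linarith
    _ = 4 / δ * (∫ t in (-T)..T, ‖riemannZeta (σ + t * I) - PN N (σ + t * I)‖ ^ 2) + δ / 4 * (2 * T) := by
        have hc2 : Continuous fun t : ℝ => 4 / δ * ‖riemannZeta (σ + t * I) - PN N (σ + t * I)‖ ^ 2 :=
          (hcont.pow 2).const_mul _
        rw [intervalIntegral.integral_add (hc2.intervalIntegrable _ _)
          (continuous_const.intervalIntegrable _ _), intervalIntegral.integral_const_mul,
          intervalIntegral.integral_const]
        simp; ring
    _ ≤ 4 / δ * (δ ^ 2 / 8 * T) + δ / 4 * (2 * T) := by gcongr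
    _ = δ * T := by field_simp; ring

lemma cauchy_avg {f : ℂ → ℂ} {z s : ℂ} {r : ℝ} (hr : 0 < r)
    (hf : ∀ w ∈ Metric.closedBall z r, DifferentiableAt ℂ f w) (hs : s ∈ Metric.ball z (r / 2)) :
    ‖f s‖ ≤ ∫ θ in (0:ℝ)..(2 * Real.pi), ‖f (circleMap z r θ)‖ := by
  have hs2 : s ∈ Metric.ball z r := Metric.ball_subset_ball (by linarith) hs
  have hcont : ContinuousOn f (Metric.closedBall z r) := fun w hw => (hf w hw).continuousAt.continuousWithinAt
  have h := two_pi_I_inv_smul_circleIntegral_sub_inv_smul_of_differentiable_on_off_countable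
    Set.countable_empty hs2 hcont
    (fun w hw => hf w (Metric.ball_subset_closedBall hw.1))
  have hmem : ∀ θ, circleMap z r θ ∈ Metric.closedBall z r := fun θ => circleMap_mem_closedBall z hr.le θ
  have hc : Continuous fun θ : ℝ => f (circleMap z r θ) :=
    hcont.comp_continuous (continuous_circleMap z r) hmem
  have hdist : ∀ θ, r / 2 ≤ ‖circleMap z r θ - s‖ := by
    intro θ
    have h1 : ‖circleMap z r θ - z‖ = r := by simp [circleMap, abs_of_pos hr]
    have h2 : ‖s - z‖ < r / 2 := by simpa [dist_eq_norm] using hs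
    have h3 : ‖circleMap z r θ - z‖ ≤ ‖circleMap z r θ - s‖ + ‖s - z‖ := by
      have := norm_add_le (circleMap z r θ - s) (s - z)
      simpa using this
    linarith
  rw [← h, norm_smul]
  have hb : ‖∮ z in C(z, r), (z - s)⁻¹ • f z‖ ≤ 2 * ∫ θ in (0:ℝ)..(2 * Real.pi), ‖f (circleMap z r θ)‖ := by
    unfold circleIntegral
    rw [← intervalIntegral.integral_const_mul]
    apply intervalIntegral.norm_integral_le_of_norm_le (by positivity)
    · refine Eventually.of_forall fun θ _ => ?_
      rw [norm_smul, norm_smul, norm_inv]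
      have h1 : ‖deriv (circleMap z r) θ‖ = r := by simp [abs_of_pos hr]
      rw [h1]
      have h2 : r * ‖circleMap z r θ - s‖⁻¹ ≤ 2 := by
        rw [← div_eq_mul_inv, div_le_iff₀ (by linarith [hdist θ])]
        linarith [hdist θ]
      rw [← mul_assoc]
      gcongr
    · exact (hc.norm.const_mul 2).intervalIntegrable _ _
  have hn : ‖(2 * Real.pi * I : ℂ)⁻¹‖ ≤ 1 / 2 := by
    rw [norm_inv]
    simp only [norm_mul, norm_I, mul_one, Complex.norm_real, Real.norm_of_nonneg Real.pi_pos.le, Complex.norm_ofNat]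
    rw [one_div]
    apply inv_anti₀ (by norm_num)
    linarith [Real.pi_gt_three]
  have h0 := norm_nonneg (∮ z in C(z, r), (z - s)⁻¹ • f z)
  calc _ ≤ 1 / 2 * (2 * ∫ θ in (0:ℝ)..(2 * Real.pi), ‖f (circleMap z r θ)‖) := by gcongr
    _ = _ := by ring

lemma zP_joint (N : ℕ) {z : ℂ} {r : ℝ} (hr : 0 < r) (hzr : z.re + r < 1) :
    Continuous (fun p : ℝ × ℝ => ‖riemannZeta (circleMap z r p.1 + p.2 * I) - PN N (circleMap z r p.1 + p.2 * I)‖) := by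
  apply Continuous.norm
  rw [continuous_iff_continuousAt]
  intro p
  have hre : (circleMap z r p.1).re ≤ z.re + r := by
    have h1 : ‖circleMap z r p.1 - z‖ = r := by simp [circleMap, abs_of_pos hr]
    have h2 := (Complex.re_le_norm (circleMap z r p.1 - z))
    rw [h1, Complex.sub_re] at h2
    linarith
  have h := (zP_diff N (s := circleMap z r p.1 + p.2 * I) (by simp; linarith)).continuousAt
  have hc : Continuous fun p : ℝ × ℝ => circleMap z r p.1 + p.2 * I := by
    have := continuous_circleMap z r
    fun_prop
  exact ContinuousAt.comp (f := fun p : ℝ × ℝ => circleMap z r p.1 + p.2 * I) h hc.continuousAt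

lemma circ_in (N : ℕ) {w : ℂ} {T : ℝ} (hre : w.re < 1) (him : |w.im| ≤ T) :
    ∫ τ in (-T)..T, ‖riemannZeta (w + τ * I) - PN N (w + τ * I)‖ ≤
      ∫ t in (-(2 * T))..(2 * T), ‖riemannZeta (w.re + t * I) - PN N (w.re + t * I)‖ := by
  rw [abs_le] at him
  have hg := (zP_cont N hre).norm
  have e : ∫ τ in (-T)..T, ‖riemannZeta (w + τ * I) - PN N (w + τ * I)‖ =
      ∫ t in (-T + w.im)..(T + w.im), ‖riemannZeta (w.re + t * I) - PN N (w.re + t * I)‖ := by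
    rw [← intervalIntegral.integral_comp_add_right
      (fun t : ℝ => ‖riemannZeta (w.re + t * I) - PN N (w.re + t * I)‖)]
    apply intervalIntegral.integral_congr
    intro τ _
    have : w + τ * I = w.re + ((τ + w.im : ℝ) : ℂ) * I := by
      apply Complex.ext <;> simp; ring
    simp only [this]
  rw [e]
  exact intervalIntegral.integral_mono_interval (by linarith) (by linarith) (by linarith)
    (Eventually.of_forall fun t => norm_nonneg _) (hg.intervalIntegrable _ _)

lemma circ_swap {g : ℝ × ℝ → ℝ} (hg : Continuous g) {T C : ℝ}
    (h : ∀ θ : ℝ, ∫ τ in (-T)..T, g (θ, τ) ≤ C) :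
    ∫ τ in (-T)..T, ∫ θ in (0:ℝ)..(2 * Real.pi), g (θ, τ) ≤ 2 * Real.pi * C := by
  have hj' : Continuous (Function.uncurry fun τ θ : ℝ => g (θ, τ)) :=
    hg.comp continuous_swap
  have hi : IntegrableOn (Function.uncurry fun τ θ : ℝ => g (θ, τ))
      (Set.uIoc (-T) T ×ˢ Set.uIoc 0 (2 * Real.pi)) :=
    (hj'.continuousOn.integrableOn_compact (isCompact_uIcc.prod isCompact_uIcc)).mono_set
      (Set.prod_mono Set.uIoc_subset_uIcc Set.uIoc_subset_uIcc)
  rw [intervalIntegral_intervalIntegral_swap hi]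
  calc _ ≤ ∫ θ in (0:ℝ)..(2 * Real.pi), C := by
        apply intervalIntegral.integral_mono_on (by positivity)
        · exact (intervalIntegral.continuous_parametric_intervalIntegral_of_continuous'
            (f := fun θ τ : ℝ => g (θ, τ)) hg _ _).intervalIntegrable _ _
        · exact continuous_const.intervalIntegrable _ _
        · exact fun θ _ => h θ
    _ = _ := by rw [intervalIntegral.integral_const]; simp

lemma circ_int (N : ℕ) {z : ℂ} {r a b δ T : ℝ} (hr : 0 < r) (hb : b < 1) (hza : a ≤ z.re - r) (hzb : z.re + r ≤ b)
    (hT : ‖z‖ + r ≤ T)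
    (h : ∀ σ, a ≤ σ → σ ≤ b →
      ∫ t in (-(2 * T))..(2 * T), ‖riemannZeta (σ + t * I) - PN N (σ + t * I)‖ ≤ δ * (2 * T)) :
    ∫ τ in (-T)..T, ∫ θ in (0:ℝ)..(2 * Real.pi),
      ‖riemannZeta (circleMap z r θ + τ * I) - PN N (circleMap z r θ + τ * I)‖ ≤ 4 * Real.pi * δ * T := by
  have hj := zP_joint N hr (show z.re + r < 1 by linarith)
  have := circ_swap hj (T := T) (C := δ * (2 * T)) (by
    intro θ
    have h1 : ‖circleMap z r θ - z‖ = r := by simp [circleMap, abs_of_pos hr]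
    have hre := (abs_le.mp ((Complex.abs_re_le_norm (circleMap z r θ - z)).trans h1.le))
    rw [Complex.sub_re] at hre
    have him : |(circleMap z r θ).im| ≤ T := by
      have h2 := norm_add_le (circleMap z r θ - z) z
      rw [sub_add_cancel, h1] at h2
      have := Complex.abs_im_le_norm (circleMap z r θ)
      linarith
    exact (circ_in N (by linarith) him).trans (h _ (by linarith) (by linarith)))
  refine this.trans (le_of_eq (by ring))

lemma sup_L1 {K : Set ℂ} (hK : IsCompact K) {a' b' : ℝ} (ha : 1/2 < a') (hb : b' < 1)
    (hKa : ∀ s ∈ K, a' ≤ s.re ∧ s.re ≤ b') {δ : ℝ} (hδ : 0 < δ) :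
    ∃ N : ℕ, ∀ᶠ T : ℝ in atTop, ∀ G : ℝ → ℝ, Continuous G →
      (∀ τ : ℝ, ∀ B : ℝ, 0 ≤ B → (∀ s ∈ K, ‖riemannZeta (s + τ * I) - PN N (s + τ * I)‖ ≤ B) → G τ ≤ B) →
      ∫ τ in (-T)..T, G τ ≤ δ * T := by
  set r := min (a' - 1/2) (1 - b') / 2 with hr
  have hr0 : 0 < r := by
    have : 0 < min (a' - 1/2) (1 - b') := lt_min (by linarith) (by linarith)
    positivity
  have hr1 : 2 * r ≤ a' - 1/2 := by
    have := min_le_left (a' - 1/2) (1 - b'); linarith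
  have hr2 : 2 * r ≤ 1 - b' := by
    have := min_le_right (a' - 1/2) (1 - b'); linarith
  obtain ⟨t0, ht, htf, hcov⟩ := finite_cover_balls_of_compact hK (show 0 < r / 2 by positivity)
  obtain ⟨t, rfl⟩ := htf.exists_finset_coe
  set δ' := δ / (4 * Real.pi * (t.card + 1)) with hδ'
  have hδ'0 : 0 < δ' := by positivity
  obtain ⟨N, hN⟩ := zeta_L1 (a := a' - r) (b := b' + r) (by linarith) (by linarith) hδ'0
  refine ⟨N, ?_⟩
  have h2 : ∀ᶠ T : ℝ in atTop, ∀ z ∈ t, ‖z‖ + r ≤ T :=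
    (Finset.eventually_all t).mpr fun z _ => eventually_ge_atTop _
  have hN2 := (tendsto_id.const_mul_atTop (show (0:ℝ) < 2 by norm_num)).eventually hN
  filter_upwards [hN2, h2, eventually_ge_atTop 0] with T hT hTz hT0 G hG hGle
  simp only [id] at hT
  set A : ℂ → ℝ → ℝ := fun z τ => ∫ θ in (0:ℝ)..(2 * Real.pi),
      ‖riemannZeta (circleMap z r θ + τ * I) - PN N (circleMap z r θ + τ * I)‖ with hA
  have hzK : ∀ z ∈ t, z ∈ K := fun z hz => ht hz
  have hA0 : ∀ z τ, 0 ≤ A z τ := fun z τ => intervalIntegral.integral_nonneg (by positivity) fun _ _ => norm_nonneg _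
  have hAc : ∀ z ∈ t, Continuous (A z) := by
    intro z hz
    have hj := zP_joint N hr0 (show z.re + r < 1 by linarith [hKa z (hzK z hz)])
    have hj' := hj.comp continuous_swap
    exact intervalIntegral.continuous_parametric_intervalIntegral_of_continuous' (f := fun τ θ : ℝ => ‖riemannZeta (circleMap z r θ + τ * I) - PN N (circleMap z r θ + τ * I)‖) hj' _ _
  have hGA : ∀ τ, G τ ≤ ∑ z ∈ t, A z τ := by
    intro τ
    apply hGle τ _ (Finset.sum_nonneg fun z _ => hA0 z τ)
    intro s hs
    obtain ⟨z, hz, hsz⟩ := Set.mem_iUnion₂.mp (hcov hs)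
    refine le_trans ?_ (Finset.single_le_sum (f := fun z => A z τ) (fun z _ => hA0 z τ) hz)
    refine cauchy_avg (f := fun s => riemannZeta (s + τ * I) - PN N (s + τ * I)) hr0 ?_ hsz
    intro w hw
    have hw' : ‖w - z‖ ≤ r := by simpa [dist_eq_norm] using hw
    have h3 := (Complex.re_le_norm (w - z)).trans hw'
    rw [Complex.sub_re] at h3
    have h4 := zP_diff N (s := w + τ * I) (by simp; linarith [hKa z (hzK z hz)])
    exact DifferentiableAt.comp (f := fun w : ℂ => w + τ * I) w h4 (by fun_prop)
  calc ∫ τ in (-T)..T, G τ ≤ ∫ τ in (-T)..T, ∑ z ∈ t, A z τ := by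
        apply intervalIntegral.integral_mono_on (by linarith) (hG.intervalIntegrable _ _)
        · exact (continuous_finsetSum t hAc).intervalIntegrable _ _
        · exact fun τ _ => hGA τ
    _ = ∑ z ∈ t, ∫ τ in (-T)..T, A z τ :=
        intervalIntegral.integral_finsetSum fun z hz => (hAc z hz).intervalIntegrable _ _
    _ ≤ ∑ z ∈ t, 4 * Real.pi * δ' * T := by
        apply Finset.sum_le_sum
        intro z hz
        have hz' := hKa z (hzK z hz)
        exact circ_int N hr0 (b := b' + r) (a := a' - r) (by linarith) (by linarith) (by linarith) (hTz z hz) hT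
    _ = t.card * (4 * Real.pi * δ' * T) := by rw [Finset.sum_const, nsmul_eq_mul]
    _ ≤ (t.card + 1) * (4 * Real.pi * δ' * T) := by gcongr; linarith
    _ = δ * T := by rw [hδ']; field_simp

noncomputable def logSub : AddSubgroup ℝ where
  carrier := Set.range fun q : {q : ℚ // 0 < q} => Real.log ((q : ℚ) : ℝ)
  zero_mem' := ⟨⟨1, one_pos⟩, by simp⟩
  add_mem' := by
    rintro _ _ ⟨p, rfl⟩ ⟨q, rfl⟩
    refine ⟨⟨p.1 * q.1, mul_pos p.2 q.2⟩, ?_⟩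
    have hp : ((p.1 : ℚ) : ℝ) ≠ 0 := by exact_mod_cast p.2.ne'
    have hq : ((q.1 : ℚ) : ℝ) ≠ 0 := by exact_mod_cast q.2.ne'
    simp only [Rat.cast_mul]
    exact Real.log_mul hp hq
  neg_mem' := by
    rintro _ ⟨p, rfl⟩
    refine ⟨⟨p.1⁻¹, inv_pos.mpr p.2⟩, ?_⟩
    simp only [Rat.cast_inv]
    exact Real.log_inv _

lemma logSub_countable : (logSub : Set ℝ).Countable := Set.countable_range _

lemma PN_shift (N : ℕ) (s : ℂ) (τ : ℝ) :
    PN N (s + τ * I) = ∑ i : Fin N, (Circle.exp (-Real.log ((i : ℕ) + 1 : ℕ) * τ) : ℂ) * (((i : ℕ) + 1 : ℕ) : ℂ) ^ (-s) := by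
  rw [Fin.sum_univ_eq_sum_range (fun i : ℕ => (Circle.exp (-Real.log (i + 1 : ℕ) * τ) : ℂ) * ((i + 1 : ℕ) : ℂ) ^ (-s)) N]
  unfold PN
  rw [← Finset.Ico_add_one_right_eq_Icc, Finset.sum_Ico_eq_sum_range]
  apply Finset.sum_congr (by simp)
  intro i _
  have hn : ((i + 1 : ℕ) : ℂ) ≠ 0 := by exact_mod_cast Nat.succ_ne_zero i
  rw [add_comm 1 i, neg_add, Complex.cpow_add _ _ hn, mul_comm, Circle.coe_exp]
  congr 1
  rw [Complex.cpow_def_of_ne_zero hn, Complex.natCast_log.symm]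
  congr 1
  push_cast
  ring

theorem self_approx_zeta_ae :
    ∀ᵐ d : ℝ ∂volume,
      ∀ K : Set ℂ, IsCompact K → K ⊆ strip → IsConnected Kᶜ → ∀ ε : ℝ, 0 < ε →
        0 < lowerDens {τ : ℝ |
          supNorm K (fun s => riemannZeta (s + (d * τ : ℝ) * Complex.I)
            - riemannZeta (s + τ * Complex.I)) < ENNReal.ofReal ε} := by
  have hbad : ((fun p : ℝ × ℝ => -p.1 / p.2) '' ((logSub : Set ℝ) ×ˢ (logSub : Set ℝ))).Countable :=
    (logSub_countable.prod logSub_countable).image _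
  filter_upwards [hbad.ae_notMem volume, (Set.countable_singleton (0:ℝ)).ae_notMem volume] with d hd hd0
  have hd0 : d ≠ 0 := hd0
  have hdΛ : ∀ l ∈ logSub, ∀ m ∈ logSub, l + d * m = 0 → m = 0 := by
    intro l hl m hm h
    by_contra hm0
    apply hd
    refine ⟨(l, m), ⟨hl, hm⟩, ?_⟩
    simp only
    field_simp
    linarith
  intro K hK hKs _ ε hε
  obtain ⟨a', b', ha, hb, hKab⟩ : ∃ a' b' : ℝ, 1/2 < a' ∧ b' < 1 ∧ ∀ s ∈ K, a' ≤ s.re ∧ s.re ≤ b' := by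
    rcases K.eq_empty_or_nonempty with rfl | hne
    · exact ⟨3/4, 3/4, by norm_num, by norm_num, by simp⟩
    · obtain ⟨x, hx, hx'⟩ := hK.exists_isMinOn hne Complex.continuous_re.continuousOn
      obtain ⟨y, hy, hy'⟩ := hK.exists_isMaxOn hne Complex.continuous_re.continuousOn
      exact ⟨x.re, y.re, (hKs hx).1, (hKs hy).2, fun s hs => ⟨hx' hs, hy' hs⟩⟩
  have : CompactSpace K := isCompact_iff_compactSpace.mp hK
  have hjc : Continuous (fun p : ℝ × K => riemannZeta ((p.2 : ℂ) + p.1 * I)) := by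
    rw [continuous_iff_continuousAt]
    intro p
    have hne : (p.2 : ℂ) + p.1 * I ≠ 1 := by
      intro h
      have := congrArg Complex.re h
      simp at this
      linarith [(hKab _ p.2.2).2]
    have h := (differentiableAt_riemannZeta hne).continuousAt
    exact ContinuousAt.comp (f := fun p : ℝ × K => (p.2 : ℂ) + p.1 * I) h (by fun_prop)
  let F : C(ℝ, C(K, ℂ)) := ContinuousMap.curry ⟨_, hjc⟩
  have hFv : ∀ τ (s : K), F τ s = riemannZeta ((s : ℂ) + τ * I) := fun τ s => rfl
  have hvc : ∀ n : ℕ, Continuous (fun s : K => ((n + 1 : ℕ) : ℂ) ^ (-(s : ℂ))) := by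
    intro n
    have hn : ((n + 1 : ℕ) : ℂ) ≠ 0 := by exact_mod_cast Nat.succ_ne_zero n
    exact (continuous_subtype_val.neg).const_cpow (Or.inl hn)
  let v : ℕ → C(K, ℂ) := fun n => ⟨_, hvc n⟩
  have hvv : ∀ n (s : K), v n s = ((n + 1 : ℕ) : ℂ) ^ (-(s : ℂ)) := fun n s => rfl
  obtain ⟨c, hc, hcT⟩ := abstract_selfapprox (Λ := logSub) hd0 hdΛ (F := F) F.continuous (by
    intro δ hδ
    obtain ⟨N, hN⟩ := sup_L1 hK ha hb hKab hδ
    refine ⟨N, fun i => -Real.log ((i : ℕ) + 1 : ℕ), fun i => v i, ?_, ?_⟩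
    · intro i
      apply neg_mem
      exact ⟨⟨(((i : ℕ) + 1 : ℕ) : ℚ), by exact_mod_cast Nat.succ_pos _⟩, by simp⟩
    · filter_upwards [hN] with T hT
      apply hT
      · apply Continuous.norm
        apply F.continuous.sub
        apply continuous_finsetSum
        intro i _
        have hci : Continuous fun τ : ℝ => (Circle.exp (-Real.log ((i : ℕ) + 1 : ℕ) * τ) : ℂ) := by
          simp only [Circle.coe_exp]
          fun_prop
        exact hci.fun_smul continuous_const
      · intro τ B hB hBs
        rw [ContinuousMap.norm_le _ hB]
        intro s
        have := hBs s s.2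
        rw [PN_shift] at this
        simpa [hFv, hvv, ContinuousMap.sum_apply] using this) (ε := ε / 2) (by positivity)
  refine lt_of_lt_of_le hc ?_
  unfold lowerDens
  apply le_liminf_of_le
  · apply IsBoundedUnder.isCoboundedUnder_ge
    refine ⟨1, ?_⟩
    rw [eventually_map]
    filter_upwards [eventually_gt_atTop 0] with T hT
    rw [div_le_one hT]
    apply ENNReal.toReal_le_of_le_ofReal hT.le
    refine (measure_mono Set.inter_subset_right).trans ?_
    rw [Real.volume_Icc, sub_zero]
  · filter_upwards [hcT, eventually_gt_atTop 0] with T hT hT0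
    rw [le_div_iff₀ hT0]
    refine hT.trans ?_
    apply ENNReal.toReal_mono
    · exact ((measure_mono Set.inter_subset_right).trans_lt (by rw [Real.volume_Icc]; exact ENNReal.ofReal_lt_top)).ne
    · apply measure_mono
      apply Set.inter_subset_inter_left
      intro τ hτ
      have hτ' : ‖F (d * τ) - F τ‖ < ε / 2 := hτ
      show supNorm K _ < _
      refine lt_of_le_of_lt ?_ ((ENNReal.ofReal_lt_ofReal_iff hε).mpr (half_lt_self hε))
      unfold supNorm
      refine iSup₂_le fun s hs => ?_
      have h1 := ContinuousMap.norm_coe_le_norm (F (d * τ) - F τ) ⟨s, hs⟩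
      rw [ContinuousMap.sub_apply, hFv, hFv] at h1
      rw [← ENNReal.ofReal_coe_nnreal]
      apply ENNReal.ofReal_le_ofReal
      exact h1.trans hτ'.le
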